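/- arXiv:1609.09703 — 3 statements merged into one kernel-verified Lean document; each statement's English description precedes it below -/
import Mathlib

section
/- Let d ≥ 3 be an integer. Then there exists a constant β > 0 such that for every n = (n₁,…,n_d) ∈ ℤᵈ, the function t ↦ ∏_{j=1}^d |J_{n_j}(t)| is integrable on [1,∞) and ∫₁^∞ ∏_{j=1}^d |J_{n_j}(t)| dt ≤ β. -/
/-!
The key estimate is `|J_m(t)| ≤ 2 |t² - m²|^{-1/4}` for all integers `m` and all `t > 0` with
`t ≠ |m|` (`norm_besselJ_le`). It replaces the uniform bound `O(t^{-1/3})`, whose cube is not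
integrable at infinity.

For its proof, put `φ(k) = m k + t sin k`. Integrating the derivative of the periodic function
`φ' / (φ'² + ε²) · e^{-iφ}` over a period gives (`norm_integral_le`)
`|∫ e^{-iφ}| ≤ ∫ ε² / (φ'² + ε²) + ∫ |φ''| / (φ'² + ε²)`.
The second integral is an arctangent and is at most `2π / ε` (`integral_abs_sin_le`). The first one
is `ε Im ∫ dk / (m - iε + t cos k)`, which Cauchy's integral formula evaluates and which is at most
`2π ε |t² - m²|^{-1/2}` (`circle_integral_inv`, `integral_lorentz_le`). The choice
`ε = |t² - m²|^{1/4}` balances the two terms.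

Consequently `|J_m(t)|³ ≤ 8 (|t - M| (t + M))^{-3/4}` with `M = |m|`. For `t ≥ 1` the factor `t + M`
is at least `max(1, |t - M|)`, so the right-hand side is dominated by the translate by `M` of one
fixed function, singular like `|s|^{-3/4}` at `0` and decaying like `|s|^{-3/2}` at infinity
(`majorant`, `norm_besselJ_cube_le`). The integral of this function does not depend on `M`.
Since `|J_m| ≤ 1` and `d ≥ 3`, the product over `j` is at most `∑ⱼ |J_{n_j}|³` (`prod_le_sum_cube`),
so `d` times a universal constant bounds its integral.
-/

open MeasureTheory

/-- The Bessel function `J_m(t) = (1/2π)∫₀^{2π} e^{-imk - i t sin k} dk` for `m ∈ ℤ`. -/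
noncomputable def besselJ (m : ℤ) (t : ℝ) : ℂ :=
  (1 / (2 * Real.pi)) * ∫ k in (0:ℝ)..(2 * Real.pi),
    Complex.exp (-Complex.I * m * k - Complex.I * t * Real.sin k)

/-! ### A rational trigonometric integral -/

/-- The value `∫₀^{2π} dk / (a + t cos k) = ± 2π / √(a² - t²)` for non-real `a`, in absolute
value: with `z = e^{ik}` it is a circle integral with one simple pole in the unit disc. -/
theorem circle_integral_inv {a : ℂ} (ha : a.im ≠ 0) {t : ℝ} (ht : 0 < t) :
    ‖∫ k in (0:ℝ)..(2 * Real.pi), (a + t * Real.cos k)⁻¹‖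
      = 2 * Real.pi / Real.sqrt (‖a - t‖ * ‖a + t‖) := by
  have ht0 : (t : ℂ) ≠ 0 := Complex.ofReal_ne_zero.mpr (ne_of_gt ht)
  -- The factorisation `(t / 2) (z - z₁) (z - z₂) = z (a + t (z + z⁻¹) / 2)`, with `‖z₁‖ < 1 < ‖z₂‖`.
  obtain ⟨z₁, z₂, hprod, hsum, h1, h2⟩ : ∃ z₁ z₂ : ℂ, z₁ * z₂ = 1 ∧ z₁ + z₂ = -2 * a / t ∧
      ‖z₁‖ < 1 ∧ 1 < ‖z₂‖ := by
    obtain ⟨w, hw⟩ := IsAlgClosed.exists_eq_mul_self (a ^ 2 - (t : ℂ) ^ 2)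
    have hp : ((-a + w) / t) * ((-a - w) / t) = 1 := by
      field_simp
      linear_combination hw
    have hs : (-a + w) / t + (-a - w) / t = -2 * a / t := by ring
    generalize (-a + w) / (t : ℂ) = x at hp hs
    generalize (-a - w) / (t : ℂ) = y at hp hs
    have hn : ‖x‖ * ‖y‖ = 1 := by rw [← norm_mul, hp, norm_one]
    have hx : ‖x‖ ≠ 1 := by
      -- On the unit circle `y = x⁻¹ = conj x`, so `x + y` would be real.
      intro h
      have hy : y = (starRingEnd ℂ) x := by
        have hc : x * (starRingEnd ℂ) x = 1 := by
          rw [Complex.mul_conj, Complex.normSq_eq_norm_sq, h]; simp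
        have hx0 : x ≠ 0 := by rintro rfl; simp at h
        exact mul_left_cancel₀ hx0 (hp.trans hc.symm)
      have h3 : -2 * a = (t : ℂ) * (x + y) := by rw [hs]; field_simp
      have h4 := congrArg Complex.im h3
      rw [hy] at h4
      simp at h4
      exact ha h4
    have hy0 : 0 < ‖y‖ := by
      rcases (norm_nonneg y).lt_or_eq with h | h
      · exact h
      · rw [← h] at hn; simp at hn
    rcases lt_or_gt_of_ne hx with h | h
    · exact ⟨x, y, hp, hs, h, by nlinarith⟩
    · exact ⟨y, x, by rw [mul_comm, hp], by rw [add_comm, hs], by nlinarith, h⟩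
  have hne : ∀ z ∈ Metric.closedBall (0:ℂ) 1, z - z₂ ≠ 0 := by
    intro z hz h
    rw [sub_eq_zero.mp h, mem_closedBall_zero_iff] at hz
    linarith
  have hcauchy := Complex.circleIntegral_sub_inv_smul_of_differentiable_on_off_countable
    (R := 1) (c := 0) (w := z₁) (f := fun z => (z - z₂)⁻¹) Set.countable_empty
    (by simpa using h1)
    (ContinuousOn.inv₀ (by fun_prop) hne)
    (fun z hz => DifferentiableAt.inv (by fun_prop) (hne z (Metric.ball_subset_closedBall hz.1)))
  have hint : ∀ k : ℝ, deriv (circleMap 0 1) k • ((circleMap 0 1 k - z₁)⁻¹ •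
      (circleMap 0 1 k - z₂)⁻¹) = (t / 2 * Complex.I) * (a + t * Real.cos k)⁻¹ := by
    intro k
    set z := circleMap 0 1 k with hz
    have hz0 : z ≠ 0 := circleMap_ne_center one_ne_zero
    have hcos : 2 * z * (Real.cos k : ℂ) = z ^ 2 + 1 := by
      have : z = Complex.exp (k * Complex.I) := by simp [hz, circleMap]
      rw [this, Complex.ofReal_cos, Complex.cos, pow_two]
      have : Complex.exp (k * Complex.I) * Complex.exp (-k * Complex.I) = 1 := by
        rw [← Complex.exp_add]; simp
      linear_combination this
    have hf : (z - z₁) * (z - z₂) = 2 / t * z * (a + t * Real.cos k) := by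
      have : (z - z₁) * (z - z₂) = z ^ 2 - z * (z₁ + z₂) + z₁ * z₂ := by ring
      rw [this, hsum, hprod]
      field_simp
      linear_combination -(t:ℂ) * hcos
    rw [deriv_circleMap, smul_eq_mul, smul_eq_mul, ← mul_inv, hf, ← hz, mul_inv, mul_inv]
    field_simp
  rw [circleIntegral] at hcauchy
  simp_rw [hint] at hcauchy
  rw [intervalIntegral.integral_const_mul] at hcauchy
  have hn := congrArg norm hcauchy
  simp only [norm_mul, smul_eq_mul, norm_div, norm_inv, Complex.norm_I, Complex.norm_real,
    Complex.norm_ofNat, mul_one, Real.norm_eq_abs, abs_of_pos ht, abs_of_pos Real.pi_pos] at hn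
  have hd : ‖z₁ - z₂‖ ^ 2 = (2 / t) ^ 2 * (‖a - t‖ * ‖a + t‖) := by
    rw [← norm_mul, ← norm_pow]
    have : (z₁ - z₂) ^ 2 = ((2 / t : ℝ) : ℂ) ^ 2 * ((a - t) * (a + t)) := by
      have : (z₁ - z₂) ^ 2 = (z₁ + z₂) ^ 2 - 4 * (z₁ * z₂) := by ring
      rw [this, hsum, hprod]
      push_cast
      field_simp
      ring
    rw [this, norm_mul, norm_pow, Complex.norm_real, Real.norm_eq_abs, sq_abs]
  have hd' : ‖z₁ - z₂‖ = 2 / t * Real.sqrt (‖a - t‖ * ‖a + t‖) := by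
    rw [← Real.sqrt_sq (norm_nonneg (z₁ - z₂)), hd, Real.sqrt_mul (by positivity),
      Real.sqrt_sq (by positivity)]
  rw [hd'] at hn
  have : t / 2 * ‖∫ k in (0:ℝ)..(2 * Real.pi), (a + t * Real.cos k)⁻¹‖
      = t / 2 * (2 * Real.pi / Real.sqrt (‖a - t‖ * ‖a + t‖)) := by
    rw [hn, mul_inv, inv_div]
    ring
  exact mul_left_cancel₀ (by positivity) this

/-- The integrand is `ε Im (m - iε + t cos k)⁻¹`, and `|m - iε ∓ t| ≥ |m ∓ t|`. -/
theorem integral_lorentz_le (m : ℝ) {t ε : ℝ} (ht : 0 < t) (hε : 0 < ε) (hmt : t ^ 2 ≠ m ^ 2) :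
    ∫ k in (0:ℝ)..(2 * Real.pi), ε ^ 2 / ((m + t * Real.cos k) ^ 2 + ε ^ 2)
      ≤ 2 * Real.pi * ε / Real.sqrt |t ^ 2 - m ^ 2| := by
  have him : ((m : ℂ) - ε * Complex.I).im ≠ 0 := by simp [hε.ne']
  have key := circle_integral_inv him ht
  have hne : ∀ k : ℝ, (m : ℂ) - ε * Complex.I + t * Real.cos k ≠ 0 := by
    intro k h
    have := congrArg Complex.im h
    simp [-Complex.ofReal_cos] at this
    exact hε.ne' this
  have hii : IntervalIntegrable (fun k : ℝ => ((m : ℂ) - ε * Complex.I + t * Real.cos k)⁻¹)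
      volume 0 (2 * Real.pi) :=
    (Continuous.inv₀ (by fun_prop) hne).intervalIntegrable _ _
  have heq : ∀ k : ℝ, ε ^ 2 / ((m + t * Real.cos k) ^ 2 + ε ^ 2) =
      ε * (((m : ℂ) - ε * Complex.I + t * Real.cos k)⁻¹).im := by
    intro k
    rw [Complex.inv_im, Complex.normSq_apply]
    simp [-Complex.ofReal_cos]
    ring
  simp_rw [heq]
  rw [intervalIntegral.integral_const_mul]
  have him' : ∫ k in (0:ℝ)..(2 * Real.pi), (((m : ℂ) - ε * Complex.I + t * Real.cos k)⁻¹).im =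
      (∫ k in (0:ℝ)..(2 * Real.pi), ((m : ℂ) - ε * Complex.I + t * Real.cos k)⁻¹).im :=
    Complex.imCLM.intervalIntegral_comp_comm hii
  rw [him']
  have h1 : (∫ k in (0:ℝ)..(2 * Real.pi), ((m : ℂ) - ε * Complex.I + t * Real.cos k)⁻¹).im ≤
      2 * Real.pi / Real.sqrt |t ^ 2 - m ^ 2| := by
    refine ((le_abs_self _).trans (Complex.abs_im_le_norm _)).trans ?_
    rw [key]
    have hpos : 0 < |t ^ 2 - m ^ 2| := abs_pos.mpr (sub_ne_zero.mpr hmt)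
    have h2 : |m - t| ≤ ‖(m : ℂ) - ε * Complex.I - t‖ := by
      simpa using Complex.abs_re_le_norm ((m : ℂ) - ε * Complex.I - t)
    have h3 : |m + t| ≤ ‖(m : ℂ) - ε * Complex.I + t‖ := by
      simpa using Complex.abs_re_le_norm ((m : ℂ) - ε * Complex.I + t)
    have h4 : |t ^ 2 - m ^ 2| = |m - t| * |m + t| := by
      rw [← abs_mul, ← abs_neg]; congr 1; ring
    have h5 : 0 < Real.sqrt |t ^ 2 - m ^ 2| := Real.sqrt_pos.mpr hpos
    have h6 : |t ^ 2 - m ^ 2| ≤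
      ‖(m : ℂ) - ε * Complex.I - t‖ * ‖(m : ℂ) - ε * Complex.I + t‖ := by
      rw [h4]; gcongr
    gcongr
  calc _ ≤ ε * (2 * Real.pi / Real.sqrt |t ^ 2 - m ^ 2|) := by gcongr
    _ = _ := by ring

/-- On each half period `sin` has constant sign and the integrand is, up to sign, the derivative
of `-(1/ε) arctan ((m + t cos k) / ε)`, so each half contributes at most `π / ε`. -/
theorem integral_abs_sin_le (m : ℝ) {t ε : ℝ} (ht : 0 < t) (hε : 0 < ε) :
    ∫ k in (0:ℝ)..(2 * Real.pi), |t * Real.sin k| / ((m + t * Real.cos k) ^ 2 + ε ^ 2)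
      ≤ 2 * Real.pi / ε := by
  have hD : ∀ k : ℝ, (m + t * Real.cos k) ^ 2 + ε ^ 2 ≠ 0 := fun k => by positivity
  have hc1 : Continuous fun k : ℝ =>
      |t * Real.sin k| / ((m + t * Real.cos k) ^ 2 + ε ^ 2) :=
    Continuous.div (by fun_prop) (by fun_prop) hD
  have hc2 : Continuous fun k : ℝ =>
      (t * Real.sin k) / ((m + t * Real.cos k) ^ 2 + ε ^ 2) :=
    Continuous.div (by fun_prop) (by fun_prop) hD
  have hderiv : ∀ k : ℝ, HasDerivAt (fun k => -(1 / ε) * Real.arctan ((m + t * Real.cos k) / ε))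
      ((t * Real.sin k) / ((m + t * Real.cos k) ^ 2 + ε ^ 2)) k := by
    intro k
    have h := ((((Real.hasDerivAt_cos k).const_mul t).const_add m).div_const ε).arctan.const_mul
      (-(1 / ε))
    refine h.congr_deriv ?_
    have := hD k
    have h2 : 1 + ((m + t * Real.cos k) / ε) ^ 2 ≠ 0 := by positivity
    field_simp
    ring
  have hint : ∀ a b : ℝ, ∫ k in a..b, (t * Real.sin k) / ((m + t * Real.cos k) ^ 2 + ε ^ 2) =
      -(1 / ε) * Real.arctan ((m + t * Real.cos b) / ε) -
      -(1 / ε) * Real.arctan ((m + t * Real.cos a) / ε) := fun a b =>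
    intervalIntegral.integral_eq_sub_of_hasDerivAt (fun k _ => hderiv k)
      (hc2.intervalIntegrable _ _)
  have hpi := Real.pi_pos
  rw [← intervalIntegral.integral_add_adjacent_intervals (b := Real.pi)
    (hc1.intervalIntegrable _ _) (hc1.intervalIntegrable _ _)]
  have e1 : ∫ k in (0:ℝ)..Real.pi, |t * Real.sin k| / ((m + t * Real.cos k) ^ 2 + ε ^ 2) =
      ∫ k in (0:ℝ)..Real.pi, (t * Real.sin k) / ((m + t * Real.cos k) ^ 2 + ε ^ 2) := by
    refine intervalIntegral.integral_congr fun k hk => ?_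
    rw [Set.uIcc_of_le hpi.le] at hk
    have := Real.sin_nonneg_of_nonneg_of_le_pi hk.1 hk.2
    simp only [abs_of_nonneg (mul_nonneg ht.le this)]
  have e2 : ∫ k in Real.pi..(2 * Real.pi),
        |t * Real.sin k| / ((m + t * Real.cos k) ^ 2 + ε ^ 2) =
      ∫ k in Real.pi..(2 * Real.pi),
        -((t * Real.sin k) / ((m + t * Real.cos k) ^ 2 + ε ^ 2)) := by
    refine intervalIntegral.integral_congr fun k hk => ?_
    rw [Set.uIcc_of_le (by linarith)] at hk
    have : Real.sin k ≤ 0 := by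
      rw [← Real.sin_sub_two_pi]
      exact Real.sin_nonpos_of_nonpos_of_neg_pi_le (by linarith [hk.2]) (by linarith [hk.1])
    simp only [abs_of_nonpos (mul_nonpos_of_nonneg_of_nonpos ht.le this), neg_div]
  rw [e1, e2, intervalIntegral.integral_neg, hint, hint]
  simp only [Real.cos_zero, Real.cos_pi, Real.cos_two_pi]
  have h1 := Real.arctan_lt_pi_div_two ((m + t * 1) / ε)
  have h2 := Real.neg_pi_div_two_lt_arctan ((m + t * -1) / ε)
  have h3 : (2 / ε) * (Real.arctan ((m + t * 1) / ε) - Real.arctan ((m + t * -1) / ε)) ≤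
      (2 / ε) * Real.pi := by gcongr; linarith
  calc _ = (2 / ε) * (Real.arctan ((m + t * 1) / ε) - Real.arctan ((m + t * -1) / ε)) := by ring
    _ ≤ _ := h3
    _ = _ := by ring

/-! ### Pointwise bounds for the Bessel functions -/

theorem norm_integrand (m : ℤ) (t k : ℝ) :
    ‖Complex.exp (-Complex.I * m * k - Complex.I * t * Real.sin k)‖ = 1 := by
  rw [Complex.norm_exp]
  simp [-Complex.ofReal_sin]

/-- Regularised integration by parts. With the phase `φ(k) = m k + t sin k`, the function
`φ' / (φ'² + ε²) · e^{-iφ}` is `2π`-periodic because `m` is an integer, so its derivative has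
integral zero. -/
theorem norm_integral_le (m : ℤ) {t ε : ℝ} (hε : 0 < ε) :
    ‖∫ k in (0:ℝ)..(2 * Real.pi), Complex.exp (-Complex.I * m * k - Complex.I * t * Real.sin k)‖
      ≤ (∫ k in (0:ℝ)..(2 * Real.pi), ε ^ 2 / ((m + t * Real.cos k) ^ 2 + ε ^ 2)) +
        ∫ k in (0:ℝ)..(2 * Real.pi), |t * Real.sin k| / ((m + t * Real.cos k) ^ 2 + ε ^ 2) := by
  set E : ℝ → ℂ := fun k => Complex.exp (-Complex.I * m * k - Complex.I * t * Real.sin k) with hE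
  set p : ℝ → ℝ := fun k => m + t * Real.cos k with hp
  set g : ℝ → ℝ := fun k => p k / (p k ^ 2 + ε ^ 2) with hg
  set g' : ℝ → ℝ := fun k => (-(t * Real.sin k)) * (ε ^ 2 - p k ^ 2) / (p k ^ 2 + ε ^ 2) ^ 2 with hg'
  have hD : ∀ k : ℝ, p k ^ 2 + ε ^ 2 ≠ 0 := fun k => by positivity
  have hpc : Continuous p := by fun_prop
  have hEc : Continuous E := by fun_prop
  have hg'c : Continuous g' := Continuous.div (by fun_prop) (by fun_prop) fun k => pow_ne_zero _ (hD k)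
  have hdg : ∀ k, HasDerivAt g (g' k) k := by
    intro k
    have h0 : HasDerivAt p (-(t * Real.sin k)) k := 
      (((Real.hasDerivAt_cos k).const_mul t).const_add (m : ℝ)).congr_deriv (by ring)
    refine (h0.div ((h0.pow 2).add_const (ε ^ 2)) (hD k)).congr_deriv ?_
    simp only [hg']
    congr 1
    simp
    ring
  have hdE : ∀ k, HasDerivAt E (-Complex.I * p k * E k) k := by
    intro k
    have h1 : HasDerivAt (fun k : ℝ => (k : ℂ)) 1 k := Complex.ofRealCLM.hasDerivAt
    have h2 : HasDerivAt (fun k : ℝ => (Real.sin k : ℂ)) (Real.cos k : ℂ) k :=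
      (Real.hasDerivAt_sin k).ofReal_comp
    refine ((h1.const_mul (-Complex.I * m)).sub (h2.const_mul (Complex.I * t))).cexp.congr_deriv ?_
    simp only [hE, hp, Pi.sub_apply]
    push_cast
    ring
  have hF : ∫ k in (0:ℝ)..(2 * Real.pi), ((g' k : ℂ) * E k + g k * (-Complex.I * p k * E k)) = 0 := by
    have hgc : Continuous g := continuous_iff_continuousAt.mpr fun k => (hdg k).continuousAt
    rw [intervalIntegral.integral_eq_sub_of_hasDerivAt
      (f := fun k => (g k : ℂ) * E k) (fun k _ => (hdg k).ofReal_comp.mul (hdE k))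
      (Continuous.intervalIntegrable (by fun_prop) _ _)]
    have e1 : g (2 * Real.pi) = g 0 := by simp [hg, hp]
    have e2 : E (2 * Real.pi) = E 0 := by
      simp only [hE, Real.sin_two_pi, Real.sin_zero]
      rw [Complex.exp_eq_exp_iff_exists_int]
      exact ⟨-m, by push_cast; ring⟩
    rw [e1, e2, sub_self]
  have hsplit : ∫ k in (0:ℝ)..(2 * Real.pi), E k =
      ∫ k in (0:ℝ)..(2 * Real.pi),
        (((ε ^ 2 / (p k ^ 2 + ε ^ 2) : ℝ) : ℂ) - Complex.I * g' k) * E k := by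
    have hgc : Continuous g := continuous_iff_continuousAt.mpr fun k => (hdg k).continuousAt
    have hc : Continuous fun k => ε ^ 2 / (p k ^ 2 + ε ^ 2) :=
      Continuous.div (by fun_prop) (by fun_prop) hD
    have : ∀ k, E k = (((ε ^ 2 / (p k ^ 2 + ε ^ 2) : ℝ) : ℂ) - Complex.I * g' k) * E k +
        Complex.I * ((g' k : ℂ) * E k + g k * (-Complex.I * p k * E k)) := by
      intro k
      have h1 : ((ε ^ 2 / (p k ^ 2 + ε ^ 2) : ℝ) : ℂ) + g k * p k = 1 := by
        norm_cast
        simp only [hg]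
        have := hD k
        field_simp
        ring
      linear_combination (-E k) * h1 + (E k * g k * p k) * Complex.I_sq
    conv_lhs => enter [1, k]; rw [this k]
    rw [intervalIntegral.integral_add (Continuous.intervalIntegrable (by fun_prop) _ _)
      (Continuous.intervalIntegrable (by fun_prop) _ _), intervalIntegral.integral_const_mul, hF]
    simp
  have hc1 : Continuous fun k => ε ^ 2 / (p k ^ 2 + ε ^ 2) :=
    Continuous.div (by fun_prop) (by fun_prop) hD
  have hc2 : Continuous fun k => |t * Real.sin k| / (p k ^ 2 + ε ^ 2) :=
    Continuous.div (by fun_prop) (by fun_prop) hD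
  rw [hsplit, ← intervalIntegral.integral_add (hc1.intervalIntegrable _ _)
    (hc2.intervalIntegrable _ _)]
  refine intervalIntegral.norm_integral_le_of_norm_le (by positivity)
    (Filter.Eventually.of_forall fun k _ => ?_) ((hc1.add hc2).intervalIntegrable _ _)
  rw [norm_mul, show ‖E k‖ = 1 from norm_integrand m t k, mul_one]
  refine (norm_sub_le _ _).trans ?_
  rw [norm_mul, Complex.norm_I, one_mul, Complex.norm_real, Complex.norm_real,
    Real.norm_of_nonneg (by positivity), Real.norm_eq_abs]
  gcongr
  simp only [hg']
  rw [abs_div, abs_mul, abs_neg, abs_of_nonneg (by positivity : 0 ≤ (p k ^ 2 + ε ^ 2) ^ 2)]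
  have h1 : |ε ^ 2 - p k ^ 2| ≤ p k ^ 2 + ε ^ 2 := by
    rw [abs_le]; constructor <;> nlinarith [sq_nonneg ε, sq_nonneg (p k)]
  have h2 : 0 < p k ^ 2 + ε ^ 2 := by positivity
  calc _ ≤ |t * Real.sin k| * (p k ^ 2 + ε ^ 2) / (p k ^ 2 + ε ^ 2) ^ 2 := by gcongr
    _ = _ := by field_simp

theorem norm_besselJ_le_one (m : ℤ) (t : ℝ) : ‖besselJ m t‖ ≤ 1 := by
  have h := intervalIntegral.norm_integral_le_of_norm_le_const (a := 0) (b := 2 * Real.pi)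
    (C := 1) (f := fun k : ℝ => Complex.exp (-Complex.I * m * k - Complex.I * t * Real.sin k))
    (fun k _ => (norm_integrand m t k).le)
  have hpi := Real.pi_pos
  rw [besselJ, norm_mul]
  have h2 : ‖(1 / (2 * Real.pi) : ℂ)‖ = 1 / (2 * Real.pi) := by
    simp [abs_of_pos hpi]
  rw [h2, sub_zero, one_mul, abs_of_pos (by positivity)] at *
  calc _ ≤ 1 / (2 * Real.pi) * (2 * Real.pi) := by gcongr
    _ = 1 := by field_simp

/-- Away from the turning point `t = |m|` the decay is `|t² - m²|^{-1/4}`, with a constant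
independent of `m`. -/
theorem norm_besselJ_le (m : ℤ) {t : ℝ} (ht : 0 < t) (hmt : t ^ 2 ≠ (m : ℝ) ^ 2) :
    ‖besselJ m t‖ ≤ 2 * |t ^ 2 - (m : ℝ) ^ 2| ^ (-(1 / 4) : ℝ) := by
  set A := |t ^ 2 - (m : ℝ) ^ 2| with hA
  have hA0 : 0 < A := abs_pos.mpr (sub_ne_zero.mpr hmt)
  have hpi := Real.pi_pos
  -- This `ε` balances `ε / √A` against `1 / ε`.
  set ε := A ^ (1 / 4 : ℝ) with hε
  have hε0 : 0 < ε := by positivity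
  have hsq : Real.sqrt A = ε ^ 2 := by
    rw [Real.sqrt_eq_rpow, hε, ← Real.rpow_natCast, ← Real.rpow_mul hA0.le]; norm_num
  have h1 := norm_integral_le m (t := t) hε0
  have h2 := integral_lorentz_le m ht hε0 hmt
  have h3 := integral_abs_sin_le m ht hε0
  rw [← hA, hsq] at h2
  have h4 := h1.trans (add_le_add h2 h3)
  rw [besselJ, norm_mul]
  have h5 : ‖(1 / (2 * Real.pi) : ℂ)‖ = 1 / (2 * Real.pi) := by
    simp [abs_of_pos hpi]
  rw [h5, Real.rpow_neg hA0.le, ← hε]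
  calc _ ≤ 1 / (2 * Real.pi) * (2 * Real.pi * ε / ε ^ 2 + 2 * Real.pi / ε) := by gcongr
    _ = _ := by field_simp; norm_num

theorem continuous_besselJ (m : ℤ) : Continuous (besselJ m) := by
  unfold besselJ
  refine continuous_const.mul
    (intervalIntegral.continuous_parametric_intervalIntegral_of_continuous' ?_ _ _)
  simp only [Function.uncurry_def]
  fun_prop

/-! ### Integration in `t` -/

/-- The function `1 + s^{-3/4}` on `[0, 1]` and `s^{-3/2}` on `(1, ∞)`, extended by zero. The
summand `1` makes it a majorant also at `s = 0`, where `s ^ (-(3 / 4))` takes the value `0`. -/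
noncomputable def halfMajorant (s : ℝ) : ℝ :=
  (Set.Icc (0:ℝ) 1).indicator (fun s => 1 + s ^ (-(3 / 4) : ℝ)) s +
    (Set.Ioi (1:ℝ)).indicator (fun s => s ^ (-(3 / 2) : ℝ)) s

/-- The even integrable function whose translates by `|m|` dominate `|J_m|³ / 8` on `[1, ∞)`. -/
noncomputable def majorant (s : ℝ) : ℝ := halfMajorant s + halfMajorant (-s)

theorem halfMajorant_nonneg (s : ℝ) : 0 ≤ halfMajorant s := by
  refine add_nonneg (Set.indicator_nonneg (fun x hx => ?_) _)
    (Set.indicator_nonneg (fun x hx => ?_) _)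
  · have := hx.1; positivity
  · have : (0:ℝ) < x := one_pos.trans hx
    positivity

theorem majorant_nonneg (s : ℝ) : 0 ≤ majorant s :=
  add_nonneg (halfMajorant_nonneg _) (halfMajorant_nonneg _)

theorem halfMajorant_abs_le (s : ℝ) : halfMajorant |s| ≤ majorant s := by
  unfold majorant
  rcases abs_choice s with h | h <;> rw [h]
  · linarith [halfMajorant_nonneg (-s)]
  · linarith [halfMajorant_nonneg s]

theorem integrable_majorant : Integrable majorant := by
  have h : Integrable halfMajorant := by
    refine Integrable.add ?_ ?_
    · rw [integrable_indicator_iff measurableSet_Icc,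
        ← intervalIntegrable_iff_integrableOn_Icc_of_le zero_le_one]
      exact intervalIntegrable_const.add (intervalIntegral.intervalIntegrable_rpow' (by norm_num))
    · rw [integrable_indicator_iff measurableSet_Ioi]
      exact integrableOn_Ioi_rpow_of_lt (by norm_num) one_pos
  exact h.add h.comp_neg

/-- With `M = |m|` and `s = |t - M|`, the bound `8 (s (t + M))^{-3/4}` for `|J_m(t)|³` is at most
`8 s^{-3/4}` as `t + M ≥ 1`, and at most `8 s^{-3/2}` as `t + M ≥ s`. -/
theorem norm_besselJ_cube_le (m : ℤ) {t : ℝ} (ht : 1 ≤ t) :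
    ‖besselJ m t‖ ^ 3 ≤ 8 * majorant (t - |(m : ℝ)|) := by
  set M := |(m : ℝ)| with hM
  have hM0 : 0 ≤ M := abs_nonneg _
  have h1 := norm_besselJ_le_one m t
  refine le_trans ?_ (mul_le_mul_of_nonneg_left (halfMajorant_abs_le _) (by norm_num))
  rcases eq_or_ne t M with h | h
  · have h2 : ‖besselJ m t‖ ^ 3 ≤ 1 := pow_le_one₀ (norm_nonneg _) h1
    have h3 : halfMajorant |t - M| = 1 := by
      rw [h, sub_self, abs_zero, halfMajorant]
      simp
    rw [h3]; linarith
  · set s := |t - M| with hs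
    have hs0 : 0 < s := abs_pos.mpr (sub_ne_zero.mpr h)
    have hA : |t ^ 2 - (m : ℝ) ^ 2| = s * (t + M) := by
      have h5 : 0 ≤ t + M := by linarith
      have h6 : t ^ 2 - (m : ℝ) ^ 2 = (t - M) * (t + M) := by
        rw [← sq_abs (m : ℝ)]; ring
      rw [h6, abs_mul, abs_of_nonneg h5]
    have hne : t ^ 2 ≠ (m : ℝ) ^ 2 := by
      intro h0
      rw [h0, sub_self, abs_zero] at hA
      have : 0 < s * (t + M) := by positivity
      linarith
    have h2 := norm_besselJ_le m (by linarith) hne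
    rw [hA] at h2
    have h3 : ‖besselJ m t‖ ^ 3 ≤ 8 * (s * (t + M)) ^ (-(3 / 4) : ℝ) := by
      calc _ ≤ (2 * (s * (t + M)) ^ (-(1 / 4) : ℝ)) ^ 3 := by gcongr
        _ = _ := by
          rw [mul_pow, ← Real.rpow_natCast (_ ^ _), ← Real.rpow_mul (by positivity)]; norm_num
    refine h3.trans ?_
    gcongr
    unfold halfMajorant
    rcases le_or_gt s 1 with h4 | h4
    · rw [Set.indicator_of_mem (show s ∈ Set.Icc (0:ℝ) 1 from ⟨hs0.le, h4⟩),
        Set.indicator_of_notMem (by simpa using h4)]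
      have : (s * (t + M)) ^ (-(3 / 4) : ℝ) ≤ s ^ (-(3 / 4) : ℝ) :=
        Real.rpow_le_rpow_of_nonpos hs0 (by nlinarith) (by norm_num)
      linarith
    · rw [Set.indicator_of_notMem (by simp [h4]), Set.indicator_of_mem (by simpa using h4)]
      have hsM : s ≤ t + M := abs_le.mpr ⟨by linarith, by linarith⟩
      calc _ ≤ (s * s) ^ (-(3 / 4) : ℝ) :=
            Real.rpow_le_rpow_of_nonpos (by positivity) (by gcongr) (by norm_num)
        _ = s ^ (-(3 / 2) : ℝ) := by
            rw [← pow_two, ← Real.rpow_natCast, ← Real.rpow_mul hs0.le]; norm_num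
        _ = _ := by ring

theorem prod_le_sum_cube {d : ℕ} (hd : 3 ≤ d) (a : Fin d → ℝ) (h0 : ∀ j, 0 ≤ a j)
    (h1 : ∀ j, a j ≤ 1) : ∏ j, a j ≤ ∑ j, a j ^ 3 := by
  have : Nonempty (Fin d) := ⟨⟨0, by omega⟩⟩
  obtain ⟨i, -, hi⟩ := Finset.exists_max_image Finset.univ a Finset.univ_nonempty
  calc ∏ j, a j ≤ ∏ _j : Fin d, a i :=
        Finset.prod_le_prod (fun j _ => h0 j) (fun j hj => hi j hj)
    _ = a i ^ d := by simp
    _ ≤ a i ^ 3 := pow_le_pow_of_le_one (h0 i) (h1 i) hd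
    _ ≤ _ := Finset.single_le_sum (f := fun j => a j ^ 3)
        (fun j _ => pow_nonneg (h0 j) 3) (Finset.mem_univ i)

/-- For every integer `d ≥ 3` there is `β > 0` such that for every
`n ∈ ℤᵈ` the function `t ↦ ∏_{j=1}^d |J_{n_j}(t)|` is integrable on `[1,∞)` with
`∫₁^∞ ∏_{j=1}^d |J_{n_j}(t)| dt ≤ β`. -/
theorem statement4 (d : ℕ) (hd : 3 ≤ d) :
    ∃ β : ℝ, 0 < β ∧ ∀ n : Fin d → ℤ,
      IntegrableOn (fun t : ℝ => ∏ j : Fin d, ‖besselJ (n j) t‖) (Set.Ici (1:ℝ)) ∧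
      ∫ t in Set.Ici (1:ℝ), ∏ j : Fin d, ‖besselJ (n j) t‖ ≤ β := by
  have hI : 0 ≤ ∫ s, majorant s := integral_nonneg majorant_nonneg
  refine ⟨d * (8 * ∫ s, majorant s) + 1, by positivity, fun n => ?_⟩
  set H : ℝ → ℝ := fun t => ∑ j, 8 * majorant (t - |(n j : ℝ)|) with hH
  have hHi : Integrable H :=
    integrable_finsetSum _ fun j _ => (integrable_majorant.comp_sub_right _).const_mul 8
  have hHint : ∫ t, H t = d * (8 * ∫ s, majorant s) := by
    rw [hH, integral_finsetSum _ fun j _ => (integrable_majorant.comp_sub_right _).const_mul 8]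
    simp [integral_const_mul, integral_sub_right_eq_self]
  have hH0 : ∀ t, 0 ≤ H t := fun t =>
    Finset.sum_nonneg fun j _ => mul_nonneg (by norm_num) (majorant_nonneg _)
  have hle : ∀ t ∈ Set.Ici (1:ℝ), ∏ j, ‖besselJ (n j) t‖ ≤ H t := fun t ht =>
    (prod_le_sum_cube hd _ (fun _ => norm_nonneg _) fun j => norm_besselJ_le_one _ _).trans
      (Finset.sum_le_sum fun j _ => norm_besselJ_cube_le (n j) ht)
  have hint : IntegrableOn (fun t : ℝ => ∏ j, ‖besselJ (n j) t‖) (Set.Ici (1:ℝ)) := by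
    refine Integrable.mono' hHi.integrableOn
      (continuous_finsetProd _ fun j _ => (continuous_besselJ (n j)).norm).aestronglyMeasurable ?_
    refine (ae_restrict_iff' measurableSet_Ici).mpr (Filter.Eventually.of_forall fun t ht => ?_)
    rw [Real.norm_of_nonneg (Finset.prod_nonneg fun j _ => norm_nonneg _)]
    exact hle t ht
  refine ⟨hint, ?_⟩
  calc _ ≤ ∫ t in Set.Ici (1:ℝ), H t :=
        setIntegral_mono_on hint hHi.integrableOn measurableSet_Ici hle
    _ ≤ ∫ t, H t := setIntegral_le_integral hHi (Filter.Eventually.of_forall hH0)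
    _ ≤ _ := by rw [hHint]; linarith
end

section
/- Let d ≥ 1 be an integer and let λ ∈ ℂ with Im λ < 0. Then Δ − λI is boundedly invertible on ℓ²(ℤᵈ), and for all n, n' ∈ ℤᵈ, setting m = n − n', one has ((Δ − λI)⁻¹ δ_{n'})(n) = −i ∫₀^∞ e^{−itλ} ∏_{j=1}^d i^{−m_j} J_{m_j}(t) dt, the integral being absolutely convergent. -/
/-!
The Fourier transform `ℓ²(ℤᵈ) ≃ L²((ℝ/ℤ)ᵈ)` turns the discrete Laplacian into multiplication by the
real function `c(θ) = ∑ⱼ cos(2πθⱼ)`.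

The Laplacian is self-adjoint, so its spectrum is real and `Δ - l` is invertible for `Im l < 0`
(`lattice_laplacian_isSelfAdjoint`). The Fourier coefficients `u(n)` of the continuous function
`e^{2πi n'·θ} (c(θ) - l)⁻¹` are square summable and satisfy `(Δ - l) u = δ_{n'}`, because the
symbol cancels the denominator and the monomials are orthonormal (`exists_green`). By invertibility,
`u = (Δ - l)⁻¹ δ_{n'}`.

It remains to rewrite `u(n)` as a Laplace transform (`laplace_besselJ`). Since `Im (c(θ) - l) > 0`,
`(c(θ) - l)⁻¹ = -i ∫₀^∞ e^{it(c(θ) - l)} dt`; the double integral in `(t, θ)` converges absolutely,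
with integrand bounded by `e^{t Im l}`, so Fubini applies. For fixed `t` the integral over the torus
factorises over the coordinates, and each factor is a Bessel function after a shift by a
quarter period that exchanges `cos` for `-sin` (`fourier_integral_eq_besselJ`).
-/

open MeasureTheory

/-- `L` is the discrete Laplacian on `ℓ²(ℤᵈ)`:
`(Lf)(n) = (1/2)∑_{j=1}^d (f(n+eⱼ) + f(n-eⱼ))`. -/
def IsDiscreteLaplacian (d : ℕ)
    (L : lp (fun _ : Fin d → ℤ => ℂ) 2 →L[ℂ] lp (fun _ : Fin d → ℤ => ℂ) 2) : Prop :=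
  ∀ (f : lp (fun _ : Fin d → ℤ => ℂ) 2) (n : Fin d → ℤ),
    L f n = (1 / 2) * ∑ j : Fin d, (f (n + Pi.single j 1) + f (n - Pi.single j 1))

/-- The normalised Haar measure on the torus `(ℝ/ℤ)ᵈ`. -/
noncomputable abbrev torusMeasure (d : ℕ) : Measure (UnitAddTorus (Fin d)) :=
  Measure.pi fun _ => AddCircle.haarAddCircle

/-- The symbol `∑ⱼ cos(2πθⱼ)` of the discrete Laplacian, as a function on `(ℝ/ℤ)ᵈ`. -/
noncomputable def latticeSymbol (d : ℕ) (θ : UnitAddTorus (Fin d)) : ℝ :=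
  ∑ j, (fourier 1 (θ j) : ℂ).re

lemma continuous_latticeSymbol (d : ℕ) : Continuous (latticeSymbol d) := by
  unfold latticeSymbol
  fun_prop

/-- The coefficient form of the Jacobi–Anger expansion of `e^{it cos(2πx)}`. -/
lemma fourier_integral_eq_besselJ (m : ℤ) (t : ℝ) :
    ∫ x : UnitAddCircle, fourier (-m) x *
        Complex.exp (Complex.I * t * (fourier 1 x : ℂ).re) ∂AddCircle.haarAddCircle
      = Complex.I ^ (-m) * besselJ m t := by
  have h1 := fourierCoeff_eq_intervalIntegral (T := 1)
    (fun x : UnitAddCircle => Complex.exp (Complex.I * t * (fourier 1 x : ℂ).re)) m 0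
  simp only [fourierCoeff, smul_eq_mul] at h1
  rw [h1]
  -- `h` is the integrand of `besselJ`; shifting it by `-π/2` turns `-sin` into `cos`.
  set h : ℝ → ℂ := fun k =>
    Complex.exp (-Complex.I * m * k - Complex.I * t * Real.sin k) with hh
  have hper : Function.Periodic h (2 * Real.pi) := by
    intro k
    simp only [hh, Real.sin_add_two_pi]
    rw [Complex.exp_eq_exp_iff_exists_int]
    refine ⟨-m, ?_⟩
    push_cast
    ring
  have hg : ∀ x : ℝ, (fourier (-m) (x : UnitAddCircle) : ℂ) *
      Complex.exp (Complex.I * t * (fourier 1 (x : UnitAddCircle) : ℂ).re)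
      = Complex.I ^ (-m) * h (2 * Real.pi * x - Real.pi / 2) := by
    intro x
    have hI : Complex.I ^ (-m) = Complex.exp (-m * (Real.pi / 2 * Complex.I)) := by
      have := Complex.exp_int_mul (Real.pi / 2 * Complex.I) (-m)
      rw [Complex.exp_pi_div_two_mul_I] at this
      rw [← this]; push_cast; rfl
    have hre : (fourier 1 (x : UnitAddCircle) : ℂ).re = Real.cos (2 * Real.pi * x) := by
      rw [fourier_coe_apply]
      have : (2 * Real.pi * Complex.I * (1 : ℤ) * x / (1 : ℝ) : ℂ)
          = ((2 * Real.pi * x : ℝ) : ℂ) * Complex.I := by push_cast; ring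
      rw [this, Complex.exp_ofReal_mul_I_re]
    rw [hre, fourier_coe_apply, hI, hh]
    simp only [← Complex.exp_add, Real.sin_sub_pi_div_two]
    congr 1
    push_cast
    ring
  simp only [hg, intervalIntegral.integral_const_mul]
  have h2 := intervalIntegral.smul_integral_comp_mul_sub (a := 0) (b := 1) h
    (2 * Real.pi) (Real.pi / 2)
  have h3 := hper.intervalIntegral_add_eq (2 * Real.pi * 0 - Real.pi / 2) 0
  rw [show 2 * Real.pi * 0 - Real.pi / 2 + 2 * Real.pi = 2 * Real.pi * 1 - Real.pi / 2 by ring,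
    zero_add, ← h2] at h3
  rw [besselJ, ← h3]
  have hpi : (Real.pi : ℂ) ≠ 0 := by exact_mod_cast Real.pi_ne_zero
  simp only [Complex.real_smul, zero_add]
  push_cast
  field_simp

/-- The convolution kernel of `exp (itΔ)`, written as a torus integral, factorises into Bessel
functions. -/
lemma torus_integral_eq_prod (d : ℕ) (m : Fin d → ℤ) (t : ℝ) :
    ∫ θ, UnitAddTorus.mFourier (-m) θ * Complex.exp (Complex.I * t * latticeSymbol d θ)
        ∂torusMeasure d
      = ∏ j, Complex.I ^ (-(m j)) * besselJ (m j) t := by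
  simp only [← fourier_integral_eq_besselJ]
  rw [← integral_fintype_prod_eq_prod (μ := fun _ : Fin d => AddCircle.haarAddCircle)]
  congr 1
  ext θ
  rw [Finset.prod_mul_distrib, ← Complex.exp_sum, ← Finset.mul_sum, latticeSymbol]
  simp [UnitAddTorus.mFourier]

lemma latticeSymbol_sub_ne_zero {d : ℕ} {l : ℂ} (hl : l.im < 0) (θ : UnitAddTorus (Fin d)) :
    (latticeSymbol d θ : ℂ) - l ≠ 0 := by
  intro h
  have := congrArg Complex.im h
  simp at this
  linarith

/-- Fourier coefficients of `(∑ⱼ cos(2πθⱼ) - l)⁻¹` as a Laplace transform of Bessel products. -/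
lemma laplace_besselJ (d : ℕ) (m : Fin d → ℤ) {l : ℂ} (hl : l.im < 0) :
    IntegrableOn (fun t : ℝ => Complex.exp (-Complex.I * t * l) *
        ∏ j : Fin d, Complex.I ^ (-(m j)) * besselJ (m j) t) (Set.Ioi 0) ∧
    -Complex.I * ∫ t in Set.Ioi (0:ℝ), Complex.exp (-Complex.I * t * l) *
        ∏ j : Fin d, Complex.I ^ (-(m j)) * besselJ (m j) t
      = ∫ θ, UnitAddTorus.mFourier (-m) θ * ((latticeSymbol d θ : ℂ) - l)⁻¹ ∂torusMeasure d := by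
  set F : ℝ → UnitAddTorus (Fin d) → ℂ := fun t θ => Complex.exp (-Complex.I * t * l) *
    (UnitAddTorus.mFourier (-m) θ * Complex.exp (Complex.I * t * latticeSymbol d θ)) with hF
  have hFc : Continuous (Function.uncurry F) := by
    have := continuous_latticeSymbol d
    simp only [hF, Function.uncurry_def]
    fun_prop
  have hFn : ∀ t θ, ‖F t θ‖ ≤ Real.exp (l.im * t) := by
    intro t θ
    have h1 : ‖UnitAddTorus.mFourier (-m) θ‖ ≤ 1 :=
      ((UnitAddTorus.mFourier (-m)).norm_coe_le_norm θ).trans UnitAddTorus.mFourier_norm.le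
    have h2 : ‖Complex.exp (Complex.I * t * latticeSymbol d θ)‖ = 1 := by
      simp [Complex.norm_exp]
    have h3 : ‖Complex.exp (-Complex.I * t * l)‖ = Real.exp (l.im * t) := by
      simp [Complex.norm_exp, mul_comm]
    simp only [hF, norm_mul, h2, h3, mul_one]
    exact mul_le_of_le_one_right (Real.exp_pos _).le h1
  have hInt : Integrable (Function.uncurry F)
      ((volume.restrict (Set.Ioi (0:ℝ))).prod (torusMeasure d)) := by
    refine Integrable.mono' (g := fun p => Real.exp (l.im * p.1)) ?_
      hFc.aestronglyMeasurable (.of_forall fun p => hFn p.1 p.2)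
    exact (integrableOn_exp_mul_Ioi hl 0).comp_fst (torusMeasure d)
  have hinner : ∀ t : ℝ, ∫ θ, F t θ ∂torusMeasure d = Complex.exp (-Complex.I * t * l) *
        ∏ j : Fin d, Complex.I ^ (-(m j)) * besselJ (m j) t := by
    intro t
    simp only [hF]
    rw [integral_const_mul, torus_integral_eq_prod]
  simp only [← hinner]
  refine ⟨hInt.integral_prod_left, ?_⟩
  rw [integral_integral_swap hInt, ← integral_const_mul]
  congr 1
  ext θ
  have hne := latticeSymbol_sub_ne_zero hl θ
  have hF' : ∀ t : ℝ, F t θ = UnitAddTorus.mFourier (-m) θ *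
      Complex.exp ((Complex.I * (latticeSymbol d θ - l)) * t) := by
    intro t
    simp only [hF]
    rw [mul_left_comm, ← Complex.exp_add]
    ring_nf
  simp only [hF', integral_const_mul]
  rw [integral_exp_mul_complex_Ioi (by simpa using hl)]
  field_simp
  simp

lemma lattice_laplacian_isSelfAdjoint {d : ℕ}
    {L : lp (fun _ : Fin d → ℤ => ℂ) 2 →L[ℂ] lp (fun _ : Fin d → ℤ => ℂ) 2}
    (hL : IsDiscreteLaplacian d L) : IsSelfAdjoint L := by
  have hsingle : ∀ n : Fin d → ℤ, L (lp.single 2 n (1:ℂ)) = (1 / 2 : ℂ) • ∑ j : Fin d,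
      (lp.single 2 (n + Pi.single j 1) (1:ℂ) + lp.single 2 (n - Pi.single j 1) (1:ℂ)) := by
    intro n
    ext k
    rw [hL]
    simp only [lp.coeFn_smul, lp.coeFn_sum, lp.coeFn_add, Pi.smul_apply, Finset.sum_apply,
      Pi.add_apply, lp.single_apply, smul_eq_mul]
    congr 1
    refine Finset.sum_congr rfl fun j _ => ?_
    simp only [Pi.single_apply, eq_sub_iff_add_eq, sub_eq_iff_eq_add]
    exact add_comm _ _
  rw [ContinuousLinearMap.isSelfAdjoint_iff']
  -- `(L† f)(n) = ⟪δ_n, L† f⟫ = ⟪L δ_n, f⟫`, and `L δ_n` is explicit.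
  ext f n
  have h := ContinuousLinearMap.adjoint_inner_right L (lp.single 2 n (1:ℂ)) f
  rw [hsingle, inner_smul_left, sum_inner] at h
  simp only [inner_add_left, lp.inner_single_left] at h
  rw [hL f n]
  simpa [Complex.conj_ofNat] using h

/-- The Fourier coefficients of `e^{2πi n'·θ} (∑ⱼ cos(2πθⱼ) - l)⁻¹` form an `ℓ²` solution `u` of
`(Δ - l) u = δ_{n'}`. -/
lemma exists_green {d : ℕ}
    {L : lp (fun _ : Fin d → ℤ => ℂ) 2 →L[ℂ] lp (fun _ : Fin d → ℤ => ℂ) 2}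
    (hL : IsDiscreteLaplacian d L) {l : ℂ} (hl : l.im < 0) (n' : Fin d → ℤ) :
    ∃ u : lp (fun _ : Fin d → ℤ => ℂ) 2, (L - l • 1) u = lp.single 2 n' (1:ℂ) ∧
      ∀ n, u n = ∫ θ, UnitAddTorus.mFourier (-(n - n')) θ *
        ((latticeSymbol d θ : ℂ) - l)⁻¹ ∂torusMeasure d := by
  have hc := continuous_latticeSymbol d
  have hR : Continuous fun θ => ((latticeSymbol d θ : ℂ) - l)⁻¹ :=
    Continuous.inv₀ (by fun_prop) (latticeSymbol_sub_ne_zero hl)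
  let G : C(UnitAddTorus (Fin d), ℂ) :=
    UnitAddTorus.mFourier n' * ⟨fun θ => ((latticeSymbol d θ : ℂ) - l)⁻¹, hR⟩
  obtain ⟨u, hu⟩ : ∃ u : lp (fun _ : Fin d → ℤ => ℂ) 2,
      ∀ n, u n = UnitAddTorus.mFourierCoeff G n :=
    ⟨_, fun n => (UnitAddTorus.mFourierBasis_repr _ n).trans (UnitAddTorus.mFourierCoeff_toLp G n)⟩
  have hu' : ∀ n, u n = ∫ θ, UnitAddTorus.mFourier (-(n - n')) θ *
        ((latticeSymbol d θ : ℂ) - l)⁻¹ ∂torusMeasure d := by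
    intro n
    refine (hu n).trans (integral_congr_ae (.of_forall fun θ => ?_))
    change UnitAddTorus.mFourier (-n) θ • (UnitAddTorus.mFourier n' θ * _) = _
    beta_reduce
    rw [neg_sub, sub_eq_neg_add, UnitAddTorus.mFourier_add, smul_eq_mul, mul_assoc]
    rfl
  have hint : ∀ m : Fin d → ℤ, Integrable (fun θ => UnitAddTorus.mFourier m θ *
        ((latticeSymbol d θ : ℂ) - l)⁻¹) (torusMeasure d) := by
    intro m
    have : Continuous (fun θ => UnitAddTorus.mFourier m θ *
        ((latticeSymbol d θ : ℂ) - l)⁻¹) := by fun_prop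
    exact this.integrable_of_hasCompactSupport (HasCompactSupport.of_compactSpace _)
  have hsymb : ∀ θ, (latticeSymbol d θ : ℂ) = (1 / 2) * ∑ j : Fin d,
      (UnitAddTorus.mFourier (-Pi.single j 1) θ + UnitAddTorus.mFourier (Pi.single j 1) θ) := by
    intro θ
    simp only [UnitAddTorus.mFourier_neg, UnitAddTorus.mFourier_single, latticeSymbol]
    push_cast
    rw [Finset.mul_sum]
    refine Finset.sum_congr rfl fun j _ => ?_
    rw [Complex.re_eq_add_conj]
    ring
  have horth : ∀ m : Fin d → ℤ, ∫ θ, UnitAddTorus.mFourier m θ ∂torusMeasure d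
      = if m = 0 then 1 else 0 := by
    intro m
    have h := orthonormal_iff_ite.mp (UnitAddTorus.orthonormal_mFourier (d := Fin d)) 0 m
    rw [ContinuousMap.inner_toLp] at h
    simp only [UnitAddTorus.mFourier_zero, eq_comm (a := (0 : Fin d → ℤ))] at h
    rw [← h]
    refine integral_congr_ae (.of_forall fun θ => ?_)
    simp
  refine ⟨u, ?_, hu'⟩
  ext n
  have h1 : (L u) n - l * u n = ((L - l • 1) u) n := rfl
  rw [← h1, hL]
  simp only [hu']
  simp only [← integral_const_mul]
  simp only [← integral_add (hint _) (hint _)]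
  have hpair : ∀ j : Fin d, Integrable (fun θ =>
      UnitAddTorus.mFourier (-(n + Pi.single j 1 - n')) θ * ((latticeSymbol d θ : ℂ) - l)⁻¹ +
      UnitAddTorus.mFourier (-(n - Pi.single j 1 - n')) θ * ((latticeSymbol d θ : ℂ) - l)⁻¹)
      (torusMeasure d) := fun j => (hint _).add (hint _)
  rw [← integral_finsetSum _ fun j _ => hpair j, ← integral_const_mul,
    ← integral_sub ((integrable_finsetSum _ fun j _ => hpair j).const_mul _)
      ((hint _).const_mul _)]
  have h2 : ∀ θ, ((1 / 2) * ∑ j : Fin d,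
      (UnitAddTorus.mFourier (-(n + Pi.single j 1 - n')) θ * ((latticeSymbol d θ : ℂ) - l)⁻¹ +
       UnitAddTorus.mFourier (-(n - Pi.single j 1 - n')) θ * ((latticeSymbol d θ : ℂ) - l)⁻¹)
      - l * (UnitAddTorus.mFourier (-(n - n')) θ * ((latticeSymbol d θ : ℂ) - l)⁻¹))
      = UnitAddTorus.mFourier (-(n - n')) θ := by
    intro θ
    have hne := latticeSymbol_sub_ne_zero hl θ
    have h3 : ∀ j : Fin d,
      (UnitAddTorus.mFourier (-(n + Pi.single j 1 - n')) θ * ((latticeSymbol d θ : ℂ) - l)⁻¹ +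
       UnitAddTorus.mFourier (-(n - Pi.single j 1 - n')) θ * ((latticeSymbol d θ : ℂ) - l)⁻¹)
      = (UnitAddTorus.mFourier (-(n - n')) θ * ((latticeSymbol d θ : ℂ) - l)⁻¹) *
        (UnitAddTorus.mFourier (-Pi.single j 1) θ + UnitAddTorus.mFourier (Pi.single j 1) θ) := by
      intro j
      rw [show -(n + Pi.single j 1 - n') = -(n - n') + -Pi.single j 1 by abel,
        show -(n - Pi.single j 1 - n') = -(n - n') + Pi.single j 1 by abel,
        UnitAddTorus.mFourier_add, UnitAddTorus.mFourier_add]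
      ring
    rw [Finset.sum_congr rfl fun j _ => h3 j, ← Finset.mul_sum, mul_left_comm, ← hsymb]
    field_simp
  simp only [h2, horth, lp.single_apply, Pi.single_apply, neg_eq_zero, sub_eq_zero]

/-- For `d ≥ 1` and `λ ∈ ℂ` with `Im λ < 0`, the operator `Δ - λI` is
boundedly invertible on `ℓ²(ℤᵈ)` and, for all `n, n' ∈ ℤᵈ` with `m = n - n'`,
`((Δ - λI)⁻¹ δ_{n'})(n) = -i ∫₀^∞ e^{-itλ} ∏_{j=1}^d i^{-m_j} J_{m_j}(t) dt`,
the integral being absolutely convergent. -/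
theorem statement6 (d : ℕ) (hd : 1 ≤ d)
    (L : lp (fun _ : Fin d → ℤ => ℂ) 2 →L[ℂ] lp (fun _ : Fin d → ℤ => ℂ) 2)
    (hL : IsDiscreteLaplacian d L) (l : ℂ) (hl : l.im < 0) :
    IsUnit (L - l • (1 : lp (fun _ : Fin d → ℤ => ℂ) 2 →L[ℂ] lp (fun _ : Fin d → ℤ => ℂ) 2)) ∧
    ∀ n n' : Fin d → ℤ,
      IntegrableOn (fun t : ℝ => Complex.exp (-Complex.I * t * l) *
        ∏ j : Fin d, Complex.I ^ (-(n j - n' j)) * besselJ (n j - n' j) t) (Set.Ioi 0) ∧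
      (Ring.inverse (L - l • 1)) (lp.single 2 n' (1:ℂ)) n
        = -Complex.I * ∫ t in Set.Ioi (0:ℝ), Complex.exp (-Complex.I * t * l) *
            ∏ j : Fin d, Complex.I ^ (-(n j - n' j)) * besselJ (n j - n' j) t := by
  have hunit : IsUnit (L - l • (1 : lp (fun _ : Fin d → ℤ => ℂ) 2 →L[ℂ]
      lp (fun _ : Fin d → ℤ => ℂ) 2)) := by
    by_contra h
    have hmem : l ∈ spectrum ℂ L := by
      rw [spectrum.mem_iff, Algebra.algebraMap_eq_smul_one, ← IsUnit.neg_iff, neg_sub]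
      exact h
    have hre := (lattice_laplacian_isSelfAdjoint hL).mem_spectrum_eq_re hmem
    rw [hre] at hl
    simp at hl
  refine ⟨hunit, fun n n' => ?_⟩
  obtain ⟨hint, hval⟩ := laplace_besselJ d (n - n') hl
  refine ⟨hint, ?_⟩
  obtain ⟨u, hu, hun⟩ := exists_green hL hl n'
  refine Eq.trans ?_ ((hun n).trans hval.symm)
  -- `(L - l)⁻¹` of the point mass is `u`, as `L - l` is invertible and maps `u` to it.
  rw [← hu, ← mul_apply_eq_comp, Ring.inverse_mul_cancel _ hunit,
    one_apply_eq_self]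
end

section
/- Let d ≥ 3 be an integer. Then there exists a constant C = C(d) > 0 such that for every q : ℤᵈ → ℂ with ∑_n |q(n)|² < ∞ and every λ ∈ ℂ∖[−d,d], the operator Δ − λI is boundedly invertible on ℓ²(ℤᵈ) and ∑_{n,n' ∈ ℤᵈ} |q(n)|² · |((Δ − λI)⁻¹ δ_{n'})(n)|² · |q(n')|² ≤ C · (∑_{n ∈ ℤᵈ} |q(n)|²)², the left-hand double family being summable. -/
/-!
The double sum is at most `sup |G|² * (∑ |q|²)²`, where `G` is the matrix of `(Δ - l)⁻¹`, so it is
enough to bound `G` by a constant independent of the two sites and of `l`.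

For nonreal `l` and the sign `σ` with `σ * Im l < 0`, the resolvent kernel is, up to a unimodular
factor, the integral over `t > 0` of `exp (-i t σ l)` times the kernel of the propagator
`exp (i σ t Δ)`. The scalar factor has modulus at most `1`, so the time integral of the modulus of
the propagator kernel bounds `G`. That kernel factors over the coordinates into normalized
Bessel-type integrals `(2π)⁻¹ ∫ exp (i (m θ + t cos θ)) dθ` (`exp_laplacian_single`).

The optimal pointwise bound uniform in `m` is of order `t^(-1/3)`, whose cube is not integrable.
Instead a van der Corput type estimate (`norm_integral_cexp_le`) gives the decay
`(1 + ||t| - |m||)^(-1/2)` with a constant independent of `m` (`norm_bes_mul_sqrt_le`). The cube of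
this is integrable in `t`, with an integral bounded independently of `m`. Since each normalized
factor is at most `1` and `d ≥ 3`, the product is at most a sum of cubes of factors, which gives the
uniform bound on the time integral (`exists_integral_norm_ker_le`).

Self-adjointness of `Δ` and `‖Δ‖ ≤ d` place the spectrum in `[-d, d]`; the bound on `G` extends to
real `l` outside this interval by continuity of the resolvent (`norm_resolvent_single_le`).
-/

open MeasureTheory

/-! ### An oscillatory integral estimate -/

/-- An antiderivative of `ψ' / (ψ² + r²)` is `arctan (ψ / r) / r`, which varies by at most `π / r`
in total when `ψ` is monotone. -/
lemma integral_abs_deriv_div_le {ψ ψ' : ℝ → ℝ} {a b r : ℝ} (hab : a ≤ b) (hr : 0 < r)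
    (hψ : ∀ x, HasDerivAt ψ (ψ' x) x) (hc : Continuous ψ')
    (hsign : (∀ x ∈ Set.Icc a b, 0 ≤ ψ' x) ∨ (∀ x ∈ Set.Icc a b, ψ' x ≤ 0)) :
    ∫ x in a..b, |ψ' x| / (ψ x ^ 2 + r ^ 2) ≤ Real.pi / r := by
  have hψc : Continuous ψ := continuous_iff_continuousAt.2 fun x => (hψ x).continuousAt
  have hpos : ∀ x, 0 < ψ x ^ 2 + r ^ 2 := fun x => by positivity
  have hG : ∀ x, HasDerivAt (fun y => Real.arctan (ψ y / r) / r) (ψ' x / (ψ x ^ 2 + r ^ 2)) x := by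
    intro x
    have := (((hψ x).div_const r).arctan).div_const r
    refine this.congr_deriv ?_
    have := (hpos x).ne'
    have h3 : 1 + (ψ x / r) ^ 2 = (ψ x ^ 2 + r ^ 2) / r ^ 2 := by field_simp; ring
    rw [h3]
    field_simp
  have hI : ∫ x in a..b, ψ' x / (ψ x ^ 2 + r ^ 2)
      = Real.arctan (ψ b / r) / r - Real.arctan (ψ a / r) / r := by
    refine intervalIntegral.integral_eq_sub_of_hasDerivAt (fun x _ => hG x) ?_
    exact (hc.div (by fun_prop) fun x => (hpos x).ne').intervalIntegrable _ _
  have hB : |Real.arctan (ψ b / r) / r - Real.arctan (ψ a / r) / r| ≤ Real.pi / r := by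
    rw [← sub_div, abs_div, abs_of_pos hr]
    gcongr
    have h1 := Real.arctan_lt_pi_div_two (ψ b / r)
    have h2 := Real.neg_pi_div_two_lt_arctan (ψ b / r)
    have h3 := Real.arctan_lt_pi_div_two (ψ a / r)
    have h4 := Real.neg_pi_div_two_lt_arctan (ψ a / r)
    rw [abs_le]; constructor <;> linarith
  rw [← hI] at hB
  rcases hsign with h | h
  · rw [intervalIntegral.integral_congr (g := fun x => ψ' x / (ψ x ^ 2 + r ^ 2))]
    · exact (le_abs_self _).trans hB
    · intro x hx
      rw [Set.uIcc_of_le hab] at hx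
      simp only [abs_of_nonneg (h x hx)]
  · rw [intervalIntegral.integral_congr (g := fun x => -(ψ' x / (ψ x ^ 2 + r ^ 2)))]
    · rw [intervalIntegral.integral_neg]
      exact (neg_le_abs _).trans hB
    · intro x hx
      rw [Set.uIcc_of_le hab] at hx
      simp only [abs_of_nonpos (h x hx), neg_div]

/-- A van der Corput type bound for the phase `φ`, with `ψ = φ'` monotone, in which the first and
second derivatives of `φ` are only required not to be small simultaneously. The estimate is uniform
across stationary points: the multiplier `w = ψ / (ψ² + r²)` replaces the singular `1 / ψ` of the
usual integration by parts. -/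
lemma norm_integral_cexp_le {φ ψ ψ' : ℝ → ℝ} {a b r : ℝ} (hab : a ≤ b) (hr : 0 < r)
    (hφ : ∀ x, HasDerivAt φ (ψ x) x)
    (hψ : ∀ x, HasDerivAt ψ (ψ' x) x) (hc : Continuous ψ')
    (hsign : (∀ x ∈ Set.Icc a b, 0 ≤ ψ' x) ∨ (∀ x ∈ Set.Icc a b, ψ' x ≤ 0))
    (h : ∀ x ∈ Set.Icc a b, r ^ 2 ≤ |ψ x| + |ψ' x|) :
    ‖∫ x in a..b, Complex.exp (Complex.I * φ x)‖
      ≤ (1 + 3 * Real.pi) / r + 4 * (b - a) / r ^ 2 := by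
  have hφc : Continuous φ := continuous_iff_continuousAt.2 fun x => (hφ x).continuousAt
  have hψc : Continuous ψ := continuous_iff_continuousAt.2 fun x => (hψ x).continuousAt
  have hpos : ∀ x, 0 < ψ x ^ 2 + r ^ 2 := fun x => by positivity
  -- `w` is a regularization of `1 / ψ`, bounded by `1 / (2 r)`
  set w : ℝ → ℝ := fun x => ψ x / (ψ x ^ 2 + r ^ 2) with hw
  set w' : ℝ → ℝ := fun x => ψ' x * (r ^ 2 - ψ x ^ 2) / (ψ x ^ 2 + r ^ 2) ^ 2 with hw'
  set e : ℝ → ℂ := fun x => Complex.exp (Complex.I * φ x) with he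
  have hwd : ∀ x, HasDerivAt w (w' x) x := by
    intro x
    have := (hψ x).div (((hψ x).pow 2).add_const (r ^ 2)) (hpos x).ne'
    refine this.congr_deriv ?_
    rw [hw']
    simp only [Nat.cast_ofNat, Pi.pow_apply]
    congr 1
    ring
  have hw'c : Continuous w' :=
    Continuous.div (by fun_prop) (by fun_prop) fun x => pow_ne_zero _ (hpos x).ne'
  have hwc : Continuous w := hψc.div (by fun_prop) fun x => (hpos x).ne'
  have hec : Continuous e := by fun_prop
  have hen : ∀ x, ‖e x‖ = 1 := fun x => by
    rw [he]; simp only; rw [mul_comm]; exact Complex.norm_exp_ofReal_mul_I _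
  have hed : ∀ x, HasDerivAt e (e x * (Complex.I * ψ x)) x := fun x =>
    (((hφ x).ofReal_comp).const_mul Complex.I).cexp
  -- `F'` is the derivative of `e * w`; `-I * F'` reproduces `e` up to the integrable error `g`
  set F' : ℝ → ℂ := fun x => e x * (Complex.I * ψ x) * (w x : ℂ) + e x * (w' x : ℂ) with hF'
  have hF'c : Continuous F' := by fun_prop
  have hFI : ∫ x in a..b, F' x = e b * w b - e a * w a :=
    intervalIntegral.integral_eq_sub_of_hasDerivAt
      (f := fun x => e x * (w x : ℂ)) (fun x _ => (hed x).mul ((hwd x).ofReal_comp))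
      (hF'c.intervalIntegrable _ _)
  have hwb : ∀ x, |w x| ≤ 1 / (2 * r) := by
    intro x
    rw [hw]; simp only
    rw [abs_div, abs_of_pos (hpos x), div_le_div_iff₀ (hpos x) (by positivity)]
    nlinarith [sq_nonneg (|ψ x| - r), sq_abs (ψ x)]
  set g : ℝ → ℝ := fun x => 4 / r ^ 2 + 3 * (|ψ' x| / (ψ x ^ 2 + r ^ 2)) with hg
  have hqc : Continuous fun x => |ψ' x| / (ψ x ^ 2 + r ^ 2) :=
    Continuous.div (by fun_prop) (by fun_prop) fun x => (hpos x).ne'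
  have hgc : Continuous g := by fun_prop
  have hpt : ∀ x ∈ Set.Icc a b, ‖e x - (-Complex.I) * F' x‖ ≤ g x := by
    intro x hx
    have h0 : e x - (-Complex.I) * F' x
        = e x * (((r ^ 2 / (ψ x ^ 2 + r ^ 2) : ℝ) : ℂ) + Complex.I * (w' x : ℂ)) := by
      have h1 : ((r ^ 2 / (ψ x ^ 2 + r ^ 2) : ℝ) : ℂ) = 1 - ψ x * w x := by
        rw [hw]; simp only
        have := (hpos x).ne'
        rw [← Complex.ofReal_mul, ← Complex.ofReal_one, ← Complex.ofReal_sub]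
        congr 1
        field_simp
        ring
      rw [h1, hF']
      linear_combination (e x * ψ x * w x) * Complex.I_mul_I
    rw [h0, norm_mul, hen, one_mul]
    have h2 : |w' x| ≤ |ψ' x| / (ψ x ^ 2 + r ^ 2) := by
      rw [hw']; simp only
      rw [abs_div, abs_mul, abs_of_pos (pow_pos (hpos x) 2),
        div_le_div_iff₀ (pow_pos (hpos x) 2) (hpos x)]
      have : |r ^ 2 - ψ x ^ 2| ≤ ψ x ^ 2 + r ^ 2 := by
        rw [abs_le]; constructor <;> nlinarith [sq_nonneg r, sq_nonneg (ψ x)]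
      nlinarith [mul_le_mul_of_nonneg_left this (mul_nonneg (abs_nonneg (ψ' x)) (hpos x).le)]
    have h3 : r ^ 2 / (ψ x ^ 2 + r ^ 2) ≤ 4 / r ^ 2 + 2 * (|ψ' x| / (ψ x ^ 2 + r ^ 2)) := by
      have hr2 : 0 < r ^ 2 := by positivity
      -- by `h`, one of `|ψ' x|`, `|ψ x|` is at least `r ^ 2 / 2`
      rcases le_total (r ^ 2 / 2) |ψ' x| with h4 | h4
      · have : r ^ 2 / (ψ x ^ 2 + r ^ 2) ≤ 2 * (|ψ' x| / (ψ x ^ 2 + r ^ 2)) := by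
          rw [← mul_div_assoc]
          exact div_le_div_of_nonneg_right (by linarith) (hpos x).le
        have : 0 < 4 / r ^ 2 := by positivity
        linarith
      · have h5 : r ^ 2 / 2 ≤ |ψ x| := by linarith [h x hx]
        have : r ^ 2 / (ψ x ^ 2 + r ^ 2) ≤ 4 / r ^ 2 := by
          rw [div_le_div_iff₀ (hpos x) hr2]
          nlinarith [sq_abs (ψ x), mul_self_le_mul_self (by positivity) h5]
        have : 0 ≤ |ψ' x| / (ψ x ^ 2 + r ^ 2) := div_nonneg (abs_nonneg _) (hpos x).le
        linarith
    refine (norm_add_le _ _).trans ?_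
    rw [norm_mul, Complex.norm_I, one_mul, Complex.norm_real, Complex.norm_real,
      Real.norm_eq_abs, Real.norm_eq_abs, abs_of_nonneg (div_nonneg (sq_nonneg r) (hpos x).le)]
    simp only [hg]
    linarith
  have hmain : ‖∫ x in a..b, (e x - (-Complex.I) * F' x)‖ ≤ ∫ x in a..b, g x :=
    intervalIntegral.norm_integral_le_of_norm_le hab
      (Filter.Eventually.of_forall fun x hx => hpt x ⟨hx.1.le, hx.2⟩)
      (hgc.intervalIntegrable _ _)
  have hsub : ∫ x in a..b, (e x - (-Complex.I) * F' x)
      = (∫ x in a..b, e x) - (-Complex.I) * (e b * w b - e a * w a) := by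
    rw [← hFI, ← intervalIntegral.integral_const_mul]
    exact intervalIntegral.integral_sub (hec.intervalIntegrable _ _)
      ((continuous_const.mul hF'c).intervalIntegrable _ _)
  rw [hsub] at hmain
  have hgI : ∫ x in a..b, g x ≤ 4 * (b - a) / r ^ 2 + 3 * (Real.pi / r) := by
    have hadd : ∫ x in a..b, g x = (∫ _ in a..b, 4 / r ^ 2)
        + ∫ x in a..b, 3 * (|ψ' x| / (ψ x ^ 2 + r ^ 2)) :=
      intervalIntegral.integral_add intervalIntegrable_const
        ((continuous_const.mul hqc).intervalIntegrable _ _)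
    rw [hadd, intervalIntegral.integral_const_mul, intervalIntegral.integral_const, smul_eq_mul]
    have := integral_abs_deriv_div_le hab hr hψ hc hsign
    have h6 : (b - a) * (4 / r ^ 2) = 4 * (b - a) / r ^ 2 := by ring
    linarith
  have hbd : ‖-Complex.I * (e b * w b - e a * w a)‖ ≤ 1 / r := by
    rw [norm_mul, norm_neg, Complex.norm_I, one_mul]
    refine (norm_sub_le _ _).trans ?_
    rw [norm_mul, norm_mul, hen, hen, one_mul, one_mul, Complex.norm_real, Complex.norm_real]
    have : 1 / r = 1 / (2 * r) + 1 / (2 * r) := by field_simp; norm_num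
    rw [this]
    exact add_le_add (hwb b) (hwb a)
  have h7 : (1 + 3 * Real.pi) / r + 4 * (b - a) / r ^ 2
      = 1 / r + (4 * (b - a) / r ^ 2 + 3 * (Real.pi / r)) := by ring
  rw [h7]
  calc ‖∫ x in a..b, e x‖ = ‖-Complex.I * (e b * w b - e a * w a)
        + ((∫ x in a..b, e x) - -Complex.I * (e b * w b - e a * w a))‖ := by
          congr 1; ring
    _ ≤ _ := norm_add_le _ _
    _ ≤ _ := add_le_add hbd (hmain.trans hgI)

/-! ### Decay of the propagator kernel -/

/-- The unnormalized Bessel-type integral `∫ exp (i (m θ + t cos θ)) dθ` over one period. The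
period is taken to start at `-π / 2` so that it splits at `π / 2` into two intervals on each of which
`cos` has constant sign, that is, on which the derivative of the phase is monotone. -/
noncomputable def bes (m : ℤ) (t : ℝ) : ℂ :=
  ∫ θ in (-(Real.pi / 2))..(3 * Real.pi / 2),
    Complex.exp (Complex.I * ((m * θ + t * Real.cos θ : ℝ) : ℂ))

lemma norm_bes_le (m : ℤ) (t : ℝ) : ‖bes m t‖ ≤ 2 * Real.pi := by
  have := intervalIntegral.norm_integral_le_of_norm_le_const (a := -(Real.pi / 2))
    (b := 3 * Real.pi / 2) (C := 1)
    (f := fun θ : ℝ => Complex.exp (Complex.I * ((m * θ + t * Real.cos θ : ℝ) : ℂ)))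
    (fun θ _ => by rw [mul_comm, Complex.norm_exp_ofReal_mul_I])
  refine this.trans ?_
  rw [abs_of_nonneg (by linarith [Real.pi_pos])]
  linarith

/-- The phase `m θ + t cos θ` has derivatives `m - t sin θ` and `-t cos θ`, whose absolute values add
up to at least `||t| - |m||`, so `norm_integral_cexp_le` applies on each half-period. -/
lemma norm_bes_le_of_pos (m : ℤ) (t r : ℝ) (hr : 0 < r) (hs : r ^ 2 ≤ |(|t| - |(m : ℝ)|)|) :
    ‖bes m t‖ ≤ 2 * ((1 + 3 * Real.pi) / r + 4 * Real.pi / r ^ 2) := by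
  have hpi := Real.pi_pos
  have hφ : ∀ x : ℝ, HasDerivAt (fun θ : ℝ => m * θ + t * Real.cos θ) (m - t * Real.sin x) x := by
    intro x
    refine (((hasDerivAt_id x).const_mul (m : ℝ)).add
      ((Real.hasDerivAt_cos x).const_mul t)).congr_deriv ?_
    ring
  have hψ : ∀ x : ℝ, HasDerivAt (fun θ : ℝ => m - t * Real.sin θ) (-(t * Real.cos x)) x := by
    intro x
    exact ((Real.hasDerivAt_sin x).const_mul t).const_sub _
  have hlow : ∀ x : ℝ, r ^ 2 ≤ |m - t * Real.sin x| + |-(t * Real.cos x)| := by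
    intro x
    refine hs.trans ?_
    rw [abs_neg]
    have h1 : |t * Real.sin x| ≤ |t| := by
      rw [abs_mul]; exact mul_le_of_le_one_right (abs_nonneg _) (Real.abs_sin_le_one x)
    have h2 : |t| ≤ |t * Real.sin x| + |t * Real.cos x| := by
      rw [abs_mul, abs_mul, ← mul_add]
      refine le_mul_of_one_le_right (abs_nonneg _) ?_
      nlinarith [Real.sin_sq_add_cos_sq x, Real.abs_sin_le_one x, Real.abs_cos_le_one x,
        sq_abs (Real.sin x), sq_abs (Real.cos x), abs_nonneg (Real.sin x), abs_nonneg (Real.cos x)]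
    have h3 := abs_sub_abs_le_abs_sub (m : ℝ) (t * Real.sin x)
    have h4 := abs_sub_abs_le_abs_sub (t * Real.sin x) (m : ℝ)
    rw [abs_sub_comm] at h4
    have h5 := abs_nonneg (t * Real.cos x)
    rw [abs_le]
    constructor <;> linarith
  have hc : Continuous fun x : ℝ => -(t * Real.cos x) := by fun_prop
  have hi : ∀ a b : ℝ, IntervalIntegrable
      (fun θ : ℝ => Complex.exp (Complex.I * ((m * θ + t * Real.cos θ : ℝ) : ℂ))) volume a b :=
    fun a b => Continuous.intervalIntegrable (by fun_prop) _ _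
  have e1 : ‖∫ θ in (-(Real.pi / 2))..(Real.pi / 2),
      Complex.exp (Complex.I * ((m * θ + t * Real.cos θ : ℝ) : ℂ))‖
      ≤ (1 + 3 * Real.pi) / r + 4 * Real.pi / r ^ 2 := by
    have := norm_integral_cexp_le (a := -(Real.pi / 2)) (b := Real.pi / 2) (by linarith) hr hφ hψ hc
      ?_ (fun x _ => hlow x)
    · convert this using 3
      ring
    · have hcos : ∀ x ∈ Set.Icc (-(Real.pi / 2)) (Real.pi / 2), 0 ≤ Real.cos x :=
        fun x hx => Real.cos_nonneg_of_mem_Icc hx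
      rcases le_total 0 t with ht | ht
      · right; intro x hx; have := mul_nonneg ht (hcos x hx); linarith
      · left; intro x hx; nlinarith [hcos x hx]
  have e2 : ‖∫ θ in (Real.pi / 2)..(3 * Real.pi / 2),
      Complex.exp (Complex.I * ((m * θ + t * Real.cos θ : ℝ) : ℂ))‖
      ≤ (1 + 3 * Real.pi) / r + 4 * Real.pi / r ^ 2 := by
    have := norm_integral_cexp_le (a := Real.pi / 2) (b := 3 * Real.pi / 2) (by linarith) hr hφ hψ hc
      ?_ (fun x _ => hlow x)
    · convert this using 3
      ring
    · have hcos : ∀ x ∈ Set.Icc (Real.pi / 2) (3 * Real.pi / 2), Real.cos x ≤ 0 :=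
        fun x hx => Real.cos_nonpos_of_pi_div_two_le_of_le hx.1 (by linarith [hx.2])
      rcases le_total 0 t with ht | ht
      · left; intro x hx; nlinarith [hcos x hx]
      · right; intro x hx; nlinarith [hcos x hx]
  rw [bes, ← intervalIntegral.integral_add_adjacent_intervals (hi _ (Real.pi / 2)) (hi _ _)]
  refine (norm_add_le _ _).trans ?_
  linarith

/-- The decay `|bes m t| ≲ (1 + ||t| - |m||)^(-1/2)`, with a constant independent of `m`. The
integral of its cube over `t` is bounded uniformly in `m`. -/
lemma norm_bes_mul_sqrt_le (m : ℤ) (t : ℝ) :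
    ‖bes m t‖ * √(1 + |(|t| - |(m : ℝ)|)|) ≤ 100 := by
  set s := |(|t| - |(m : ℝ)|)| with hs
  have hs0 : 0 ≤ s := abs_nonneg _
  have hp := Real.pi_lt_d2
  have hp0 := Real.pi_pos
  rcases le_total s 1 with h | h
  · have h1 := norm_bes_le m t
    have h2 : √(1 + s) ≤ 2 := by
      rw [Real.sqrt_le_left (by norm_num)]; linarith
    nlinarith [norm_nonneg (bes m t), Real.sqrt_nonneg (1 + s)]
  · have hr : 1 ≤ √s := by rw [Real.one_le_sqrt]; exact h
    have hr0 : 0 < √s := by linarith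
    have hsq : √s ^ 2 = s := Real.sq_sqrt hs0
    have h1 := norm_bes_le_of_pos m t (√s) hr0 hsq.le
    have h2 : √(1 + s) ≤ 2 * √s := by
      rw [Real.sqrt_le_left (by positivity)]; nlinarith
    have h3 : 4 * Real.pi / √s ^ 2 ≤ 4 * Real.pi / √s := by
      gcongr
      nlinarith
    have h4 : ‖bes m t‖ ≤ 50 / √s := by
      refine h1.trans ?_
      have : 2 * ((1 + 3 * Real.pi) / √s + 4 * Real.pi / √s) = (2 * (1 + 7 * Real.pi)) / √s := by ring
      have h5 : (2 * (1 + 7 * Real.pi)) / √s ≤ 50 / √s := by gcongr; linarith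
      linarith
    calc ‖bes m t‖ * √(1 + s) ≤ 50 / √s * (2 * √s) := by gcongr
      _ = 100 := by field_simp; norm_num

lemma norm_bes_pow_three_le (m : ℤ) (t : ℝ) :
    ‖bes m t‖ ^ 3 ≤ 100 ^ 3 * (1 + |(|t| - |(m : ℝ)|)|) ^ (-(3 / 2 : ℝ)) := by
  set s := |(|t| - |(m : ℝ)|)| with hs
  have hs0 : 0 < 1 + s := by have : 0 ≤ s := abs_nonneg _; linarith
  have h1 : (1 + s) ^ (-(3 / 2 : ℝ)) = (√(1 + s) ^ 3)⁻¹ := by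
    rw [Real.rpow_neg hs0.le, Real.sqrt_eq_rpow, ← Real.rpow_natCast, ← Real.rpow_mul hs0.le]
    norm_num
  have h2 : 0 < √(1 + s) := Real.sqrt_pos.2 hs0
  rw [h1, ← div_eq_mul_inv, le_div_iff₀ (by positivity), ← mul_pow]
  exact pow_le_pow_left₀ (by positivity) (norm_bes_mul_sqrt_le m t) 3

lemma continuous_bes (m : ℤ) : Continuous (bes m) := by
  unfold bes
  apply intervalIntegral.continuous_parametric_intervalIntegral_of_continuous'
  fun_prop

lemma integral_norm_bes_pow_three_le (m : ℤ) (σ T : ℝ) (hσ : |σ| = 1) (hT : 0 ≤ T) :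
    ∫ t in (0 : ℝ)..T, ‖bes m (σ * t)‖ ^ 3
      ≤ 100 ^ 3 * ∫ x : ℝ, (1 + ‖x‖) ^ (-(3 / 2 : ℝ)) := by
  have hint : Integrable (fun x : ℝ => (1 + ‖x‖) ^ (-(3 / 2 : ℝ))) :=
    integrable_one_add_norm (by norm_num)
  set a := |(m : ℝ)|
  have hint2 : Integrable (fun x : ℝ => 100 ^ 3 * (1 + ‖x - a‖) ^ (-(3 / 2 : ℝ))) :=
    (hint.comp_sub_right a).const_mul _
  calc ∫ t in (0 : ℝ)..T, ‖bes m (σ * t)‖ ^ 3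
      ≤ ∫ t in (0 : ℝ)..T, 100 ^ 3 * (1 + ‖t - a‖) ^ (-(3 / 2 : ℝ)) := by
        refine intervalIntegral.integral_mono_on hT ?_ hint2.intervalIntegrable ?_
        · exact Continuous.intervalIntegrable
            ((((continuous_bes m).comp (continuous_const.mul continuous_id)).norm).pow 3) _ _
        · intro t ht
          have := norm_bes_pow_three_le m (σ * t)
          rwa [abs_mul, hσ, one_mul, abs_of_nonneg ht.1] at this
    _ ≤ ∫ t : ℝ, 100 ^ 3 * (1 + ‖t - a‖) ^ (-(3 / 2 : ℝ)) := by
        rw [intervalIntegral.integral_of_le hT]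
        exact setIntegral_le_integral hint2 (Filter.Eventually.of_forall fun x => by positivity)
    _ = _ := by
        rw [integral_const_mul, integral_sub_right_eq_self (fun x : ℝ => (1 + ‖x‖) ^ (-(3 / 2 : ℝ)))]

/-- The kernel of the propagator `exp (i t Δ)` at lattice displacement `n`: a product over the
coordinates of normalized Bessel-type integrals. See `exp_laplacian_single`. -/
noncomputable def ker {d : ℕ} (n : Fin d → ℤ) (t : ℝ) : ℂ :=
  ∏ j, ((2 * Real.pi : ℝ) : ℂ)⁻¹ * bes (n j) t

/-- Each normalized factor of `ker` has modulus at most `1`, so all but three of them can be dropped;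
the product of the remaining three is at most the sum of their cubes. This is where `d ≥ 3` enters. -/
lemma norm_ker_le {d : ℕ} (hd : 3 ≤ d) (n : Fin d → ℤ) (t : ℝ) :
    ‖ker n t‖ ≤ ∑ j, ‖bes (n j) t‖ ^ 3 := by
  set x : Fin d → ℝ := fun j => ‖((2 * Real.pi : ℝ) : ℂ)⁻¹ * bes (n j) t‖ with hx
  have hp := Real.pi_gt_three
  have hxe : ∀ j, x j = ‖bes (n j) t‖ / (2 * Real.pi) := by
    intro j
    simp only [hx]
    rw [norm_mul, norm_inv, Complex.norm_real, Real.norm_of_nonneg (by positivity)]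
    ring
  have hx0 : ∀ j, 0 ≤ x j := fun j => norm_nonneg _
  have hx1 : ∀ j, x j ≤ 1 := fun j => by
    rw [hxe, div_le_one (by positivity)]; exact norm_bes_le _ _
  have hxb : ∀ j, x j ≤ ‖bes (n j) t‖ := fun j => by
    rw [hxe]; exact div_le_self (norm_nonneg _) (by linarith)
  have h1 : ‖ker n t‖ = ∏ j, x j := by rw [ker, norm_prod]
  let i : Fin 3 ↪ Fin d := Fin.castLEEmb hd
  have h2 : ∏ j, x j ≤ ∏ k : Fin 3, x (i k) := by
    rw [← Finset.prod_map Finset.univ i x]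
    exact Finset.prod_le_prod_of_subset_of_le_one (Finset.subset_univ _) (fun j _ => hx0 j)
      (fun j _ _ => hx1 j)
  have h3 : ∏ k : Fin 3, x (i k) ≤ ∑ k : Fin 3, x (i k) ^ 3 := by
    rw [Fin.prod_univ_three, Fin.sum_univ_three]
    have ha := hx0 (i 0)
    have hb := hx0 (i 1)
    have hc := hx0 (i 2)
    generalize x (i 0) = a at *
    generalize x (i 1) = b at *
    generalize x (i 2) = c at *
    -- `a³ + b³ + c³ - 3abc = (a + b + c) ((a - b)² + (b - c)² + (a - c)²) / 2`
    have : 0 ≤ (a + b + c) * ((a - b) ^ 2 + (b - c) ^ 2 + (a - c) ^ 2) := by positivity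
    have := pow_nonneg ha 3
    have := pow_nonneg hb 3
    have := pow_nonneg hc 3
    nlinarith
  have h4 : ∑ k : Fin 3, x (i k) ^ 3 ≤ ∑ j, x j ^ 3 := by
    rw [← Finset.sum_map Finset.univ i (fun j => x j ^ 3)]
    exact Finset.sum_le_sum_of_subset_of_nonneg (Finset.subset_univ _)
      (fun j _ _ => pow_nonneg (hx0 j) 3)
  rw [h1]
  refine (h2.trans (h3.trans h4)).trans (Finset.sum_le_sum fun j _ => ?_)
  exact pow_le_pow_left₀ (hx0 j) (hxb j) 3

lemma continuous_ker {d : ℕ} (n : Fin d → ℤ) : Continuous (ker n) := by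
  unfold ker
  exact continuous_finsetProd _ fun j _ => continuous_const.mul (continuous_bes (n j))

/-- The propagator kernel is absolutely integrable in time over either half-line, uniformly in the
displacement. The direction of time is encoded by the sign `σ`. -/
lemma exists_integral_norm_ker_le {d : ℕ} (hd : 3 ≤ d) : ∃ C : ℝ, 0 < C ∧
    ∀ (n : Fin d → ℤ) (σ T : ℝ), |σ| = 1 → 0 ≤ T → ∫ t in (0 : ℝ)..T, ‖ker n (σ * t)‖ ≤ C := by
  set J := 100 ^ 3 * ∫ x : ℝ, (1 + ‖x‖) ^ (-(3 / 2 : ℝ)) with hJ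
  have hJ0 : 0 ≤ J := mul_nonneg (by norm_num) (integral_nonneg fun x => by positivity)
  refine ⟨d * J + 1, by positivity, fun n σ T hσ hT => ?_⟩
  have hb : ∀ j, Continuous fun t => ‖bes (n j) (σ * t)‖ ^ 3 := fun j =>
    (((continuous_bes (n j)).comp (continuous_const.mul continuous_id)).norm).pow 3
  calc ∫ t in (0 : ℝ)..T, ‖ker n (σ * t)‖
      ≤ ∫ t in (0 : ℝ)..T, ∑ j, ‖bes (n j) (σ * t)‖ ^ 3 := by
        refine intervalIntegral.integral_mono_on hT ?_ ?_ fun t _ => norm_ker_le hd n _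
        · exact (((continuous_ker n).comp
            (continuous_const.mul continuous_id)).norm).intervalIntegrable _ _
        · exact (continuous_finsetSum _ fun j _ => hb j).intervalIntegrable _ _
    _ = ∑ j, ∫ t in (0 : ℝ)..T, ‖bes (n j) (σ * t)‖ ^ 3 :=
        intervalIntegral.integral_finsetSum fun j _ => (hb j).intervalIntegrable _ _
    _ ≤ ∑ j : Fin d, J := Finset.sum_le_sum fun j _ =>
        integral_norm_bes_pow_three_le (n j) σ T hσ hT
    _ ≤ d * J + 1 := by simp

/-! ### The Laplacian as a self-adjoint operator -/

/-- Composition with a permutation of the index set, acting on `ℓ²`. Lattice translations are the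
case of interest. -/
noncomputable def reindex {ι : Type*} (e : ι ≃ ι) (f : lp (fun _ : ι => ℂ) 2) :
    lp (fun _ : ι => ℂ) 2 :=
  ⟨fun i => f (e i), by
    have h := (memℓp_gen_iff (by norm_num)).1 (lp.memℓp f)
    exact (memℓp_gen_iff (by norm_num)).2 (e.summable_iff.2 h)⟩

lemma reindex_apply {ι : Type*} (e : ι ≃ ι) (f : lp (fun _ : ι => ℂ) 2) (i : ι) :
    reindex e f i = f (e i) := rfl

lemma norm_reindex {ι : Type*} (e : ι ≃ ι) (f : lp (fun _ : ι => ℂ) 2) :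
    ‖reindex e f‖ = ‖f‖ := by
  rw [lp.norm_eq_tsum_rpow (by norm_num), lp.norm_eq_tsum_rpow (by norm_num)]
  congr 1
  exact e.tsum_eq (fun i => ‖f i‖ ^ (2 : ENNReal).toReal)

lemma inner_reindex {ι : Type*} (e : ι ≃ ι) (f g : lp (fun _ : ι => ℂ) 2) :
    inner ℂ (reindex e f) g = inner ℂ f (reindex e.symm g) := by
  rw [lp.inner_eq_tsum, lp.inner_eq_tsum, ← e.tsum_eq (fun i => inner ℂ (f i) (reindex e.symm g i))]
  simp [reindex_apply]

section
variable {d : ℕ} {L : lp (fun _ : Fin d → ℤ => ℂ) 2 →L[ℂ] lp (fun _ : Fin d → ℤ => ℂ) 2}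

/-- The Laplacian as a combination of translations, which are isometries with adjoints the inverse
translations. -/
lemma laplacian_eq (hL : IsDiscreteLaplacian d L) (f : lp (fun _ : Fin d → ℤ => ℂ) 2) :
    L f = (1 / 2 : ℂ) • ∑ j : Fin d, (reindex (Equiv.addRight (Pi.single j 1)) f
      + reindex (Equiv.addRight (Pi.single j 1)).symm f) := by
  ext n
  rw [hL, lp.coeFn_smul, Pi.smul_apply, lp.coeFn_sum, Finset.sum_apply, smul_eq_mul]
  rfl

lemma norm_laplacian_le (hL : IsDiscreteLaplacian d L) : ‖L‖ ≤ d := by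
  refine ContinuousLinearMap.opNorm_le_bound _ (Nat.cast_nonneg d) fun f => ?_
  rw [laplacian_eq hL, norm_smul]
  have : ‖∑ j : Fin d, (reindex (Equiv.addRight (Pi.single j 1)) f
      + reindex (Equiv.addRight (Pi.single j 1)).symm f)‖ ≤ ∑ j : Fin d, (‖f‖ + ‖f‖) := by
    refine (norm_sum_le _ _).trans (Finset.sum_le_sum fun j _ => (norm_add_le _ _).trans ?_)
    rw [norm_reindex, norm_reindex]
  rw [Finset.sum_const, Finset.card_univ, Fintype.card_fin, nsmul_eq_mul] at this
  have h2 : ‖(1 / 2 : ℂ)‖ = 1 / 2 := by norm_num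
  rw [h2]
  linarith

lemma isSelfAdjoint_laplacian (hL : IsDiscreteLaplacian d L) : IsSelfAdjoint L := by
  rw [ContinuousLinearMap.isSelfAdjoint_iff_isSymmetric]
  intro f g
  simp only [ContinuousLinearMap.coe_coe]
  rw [laplacian_eq hL, laplacian_eq hL, inner_smul_left, inner_smul_right, sum_inner, inner_sum]
  congr 1
  · simpa using map_ofNat (starRingEnd ℂ) 2
  · refine Finset.sum_congr rfl fun j _ => ?_
    rw [inner_add_left, inner_add_right, inner_reindex, inner_reindex, Equiv.symm_symm, add_comm]

lemma nontrivial_l2 (d : ℕ) : Nontrivial (lp (fun _ : Fin d → ℤ => ℂ) 2) :=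
    ⟨⟨lp.single 2 0 1, 0, fun h => by
      have := congrArg (fun f : lp (fun _ : Fin d → ℤ => ℂ) 2 => f 0) h
      simp at this⟩⟩

lemma isUnit_sub_smul_one (hL : IsDiscreteLaplacian d L) {l : ℂ}
    (hl : ¬ (l.im = 0 ∧ |l.re| ≤ d)) :
    IsUnit (L - l • (1 : lp (fun _ : Fin d → ℤ => ℂ) 2 →L[ℂ] lp (fun _ : Fin d → ℤ => ℂ) 2)) := by
  have := nontrivial_l2 d
  by_contra hu
  have hmem : l ∈ spectrum ℂ L := by
    rw [spectrum.mem_iff]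
    intro h
    apply hu
    rw [Algebra.algebraMap_eq_smul_one] at h
    rw [← neg_sub]
    exact h.neg
  have him := (isSelfAdjoint_laplacian hL).mem_spectrum_eq_re hmem
  refine hl ⟨by rw [him]; simp, ?_⟩
  exact (Complex.abs_re_le_norm l).trans
    ((spectrum.norm_le_norm_of_mem hmem).trans (norm_laplacian_le hL))

end

/-! ### The kernel of the propagator -/

/-- Lebesgue measure on the fundamental domain `(-π / 2, 3 π / 2]ᵈ` of the torus, not normalized. -/
noncomputable def torus (d : ℕ) : Measure (Fin d → ℝ) :=
  Measure.pi fun _ => volume.restrict (Set.Ioc (-(Real.pi / 2)) (3 * Real.pi / 2))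

instance (d : ℕ) : IsFiniteMeasure (torus d) := by unfold torus; infer_instance

/-- The Fourier symbol `∑ cos x_j` of the Laplacian. -/
noncomputable def sym {d : ℕ} (x : Fin d → ℝ) : ℝ := ∑ j, Real.cos (x j)

/-- The character `exp (i n · x)` of the torus. -/
noncomputable def char {d : ℕ} (n : Fin d → ℤ) (x : Fin d → ℝ) : ℂ :=
  Complex.exp (Complex.I * ((∑ j, n j * x j : ℝ) : ℂ))

/-- The Fourier coefficient of the `k`-th power of the symbol, which is the kernel of the `k`-th
power of the Laplacian (`laplacian_pow_single`). -/
noncomputable def moment {d : ℕ} (k : ℕ) (n : Fin d → ℤ) : ℂ :=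
  (((2 * Real.pi : ℝ) : ℂ)⁻¹) ^ d * ∫ x, (sym x : ℂ) ^ k * char n x ∂torus d

lemma norm_char {d : ℕ} (n : Fin d → ℤ) (x : Fin d → ℝ) : ‖char n x‖ = 1 := by
  rw [char, mul_comm, Complex.norm_exp_ofReal_mul_I]

lemma abs_sym_le {d : ℕ} (x : Fin d → ℝ) : |sym x| ≤ d := by
  refine (Finset.abs_sum_le_sum_abs _ _).trans ?_
  refine (Finset.sum_le_sum fun j _ => Real.abs_cos_le_one (x j)).trans ?_
  simp

lemma continuous_sym {d : ℕ} : Continuous (sym : (Fin d → ℝ) → ℝ) := by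
  unfold sym; fun_prop

lemma continuous_char {d : ℕ} (n : Fin d → ℤ) : Continuous (char n) := by
  unfold char; fun_prop

lemma norm_sym_pow_mul_char_le {d : ℕ} (k : ℕ) (n : Fin d → ℤ) (x : Fin d → ℝ) :
    ‖(sym x : ℂ) ^ k * char n x‖ ≤ (d : ℝ) ^ k := by
  rw [norm_mul, norm_char, mul_one, norm_pow, Complex.norm_real]
  exact pow_le_pow_left₀ (norm_nonneg _) (abs_sym_le x) k

lemma continuous_sym_pow_mul_char {d : ℕ} (k : ℕ) (n : Fin d → ℤ) :
    Continuous fun x => (sym x : ℂ) ^ k * char n x :=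
  ((Complex.continuous_ofReal.comp continuous_sym).pow k).mul (continuous_char n)

lemma integrable_sym_pow_mul_char {d : ℕ} (k : ℕ) (n : Fin d → ℤ) :
    Integrable (fun x => (sym x : ℂ) ^ k * char n x) (torus d) :=
  Integrable.of_bound (continuous_sym_pow_mul_char k n).aestronglyMeasurable ((d : ℝ) ^ k)
    (Filter.Eventually.of_forall fun x => norm_sym_pow_mul_char_le k n x)

lemma ker_eq_integral {d : ℕ} (n : Fin d → ℤ) (t : ℝ) :
    ker n t = (((2 * Real.pi : ℝ) : ℂ)⁻¹) ^ d
      * ∫ x, Complex.exp (Complex.I * t * sym x) * char n x ∂torus d := by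
  have h1 : ∀ x : Fin d → ℝ, Complex.exp (Complex.I * t * sym x) * char n x
      = ∏ j, Complex.exp (Complex.I * ((n j * x j + t * Real.cos (x j) : ℝ) : ℂ)) := by
    intro x
    rw [char, ← Complex.exp_add, ← Complex.exp_sum]
    congr 1
    rw [← Finset.mul_sum, ← Complex.ofReal_sum, Finset.sum_add_distrib, ← Finset.mul_sum, sym]
    push_cast
    ring
  simp_rw [h1]
  rw [torus, integral_fintype_prod_eq_prod
    (f := fun j θ => Complex.exp (Complex.I * ((n j * θ + t * Real.cos θ : ℝ) : ℂ))), ker,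
    Finset.prod_mul_distrib, Finset.prod_const, Finset.card_univ, Fintype.card_fin]
  congr 1
  refine Finset.prod_congr rfl fun j _ => ?_
  rw [bes, intervalIntegral.integral_of_le (by linarith [Real.pi_pos])]

/-- At time zero the Bessel-type integrals express the orthogonality of characters of the circle. -/
lemma bes_zero (m : ℤ) : bes m 0 = if m = 0 then ((2 * Real.pi : ℝ) : ℂ) else 0 := by
  unfold bes
  split_ifs with h
  · subst h
    simp
    ring
  · have hm : (Complex.I * m : ℂ) ≠ 0 := mul_ne_zero Complex.I_ne_zero (by exact_mod_cast h)
    have h1 : ∀ θ : ℝ, Complex.I * ((m * θ + 0 * Real.cos θ : ℝ) : ℂ) = (Complex.I * m) * θ := by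
      intro θ; push_cast; ring
    simp_rw [h1]
    rw [integral_exp_mul_complex hm, div_eq_zero_iff]
    left
    rw [sub_eq_zero, Complex.exp_eq_exp_iff_exists_int]
    exact ⟨m, by push_cast; ring⟩

lemma moment_zero {d : ℕ} (n : Fin d → ℤ) : moment 0 n = if n = 0 then 1 else 0 := by
  have h : moment 0 n = ker n 0 := by
    rw [ker_eq_integral, moment]
    simp
  have hp : ((2 * Real.pi : ℝ) : ℂ) ≠ 0 := by
    exact_mod_cast (by positivity : (2 * Real.pi : ℝ) ≠ 0)
  rw [h, ker]
  split_ifs with h0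
  · refine Finset.prod_eq_one fun j _ => ?_
    rw [bes_zero, h0, Pi.zero_apply, if_pos rfl, inv_mul_cancel₀ hp]
  · obtain ⟨j, hj⟩ := Function.ne_iff.1 h0
    refine Finset.prod_eq_zero (Finset.mem_univ j) ?_
    rw [bes_zero, if_neg (by simpa using hj), mul_zero]

lemma char_add_single {d : ℕ} (n : Fin d → ℤ) (j : Fin d) (x : Fin d → ℝ) :
    char (n + Pi.single j 1) x = char n x * Complex.exp (x j * Complex.I) := by
  rw [char, char, ← Complex.exp_add]
  congr 1
  have : ∑ i, ((n + Pi.single j 1 : Fin d → ℤ) i : ℝ) * x i = ∑ i, (n i : ℝ) * x i + x j := by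
    simp [add_mul, Finset.sum_add_distrib, Pi.single_apply]
  rw [this]
  push_cast
  ring

lemma char_sub_single {d : ℕ} (n : Fin d → ℤ) (j : Fin d) (x : Fin d → ℝ) :
    char (n - Pi.single j 1) x = char n x * Complex.exp (-x j * Complex.I) := by
  rw [char, char, ← Complex.exp_add]
  congr 1
  have : ∑ i, ((n - Pi.single j 1 : Fin d → ℤ) i : ℝ) * x i = ∑ i, (n i : ℝ) * x i - x j := by
    simp [sub_mul, Finset.sum_sub_distrib, Pi.single_apply]
  rw [this]
  push_cast
  ring

/-- The recursion matching `L ^ (k + 1) = L * L ^ k`: it is `2 cos θ = exp (iθ) + exp (-iθ)`. -/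
lemma moment_succ {d : ℕ} (k : ℕ) (n : Fin d → ℤ) :
    moment (k + 1) n
      = (1 / 2) * ∑ j, (moment k (n + Pi.single j 1) + moment k (n - Pi.single j 1)) := by
  have h1 : ∀ x : Fin d → ℝ, (sym x : ℂ) ^ (k + 1) * char n x
      = (1 / 2) * ∑ j, ((sym x : ℂ) ^ k * char (n + Pi.single j 1) x
          + (sym x : ℂ) ^ k * char (n - Pi.single j 1) x) := by
    intro x
    have h2 : ∀ j, (sym x : ℂ) ^ k * char (n + Pi.single j 1) x
          + (sym x : ℂ) ^ k * char (n - Pi.single j 1) x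
        = (sym x : ℂ) ^ k * char n x * (2 * Complex.cos (x j)) := by
      intro j
      rw [char_add_single, char_sub_single, Complex.two_cos]
      ring
    simp_rw [h2]
    rw [← Finset.mul_sum, ← Finset.mul_sum, pow_succ]
    have h3 : (sym x : ℂ) = ∑ j, Complex.cos (x j) := by
      rw [sym]; push_cast; rfl
    rw [← h3]
    ring
  simp only [moment]
  simp_rw [h1]
  rw [integral_const_mul, integral_finsetSum]
  · simp_rw [← mul_add]
    rw [← Finset.mul_sum]
    have : ∀ j, ∫ x, ((sym x : ℂ) ^ k * char (n + Pi.single j 1) x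
          + (sym x : ℂ) ^ k * char (n - Pi.single j 1) x) ∂torus d
        = (∫ x, (sym x : ℂ) ^ k * char (n + Pi.single j 1) x ∂torus d)
          + ∫ x, (sym x : ℂ) ^ k * char (n - Pi.single j 1) x ∂torus d := fun j =>
      integral_add (integrable_sym_pow_mul_char _ _) (integrable_sym_pow_mul_char _ _)
    simp_rw [mul_add, this]
    ring
  · exact fun j _ => (integrable_sym_pow_mul_char _ _).add (integrable_sym_pow_mul_char _ _)

/-- Expansion of `ker n t` in powers of `t`, by integrating the exponential series termwise. -/
lemma hasSum_moment {d : ℕ} (n : Fin d → ℤ) (t : ℝ) :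
    HasSum (fun k : ℕ => ((k.factorial : ℂ)⁻¹ * (Complex.I * t) ^ k) * moment k n) (ker n t) := by
  rw [ker_eq_integral]
  have hS : Summable fun k : ℕ => (|t| * d) ^ k / k.factorial := Real.summable_pow_div_factorial _
  have := hasSum_integral_of_dominated_convergence (μ := torus d)
    (F := fun (k : ℕ) x => ((k.factorial : ℂ)⁻¹ * (Complex.I * t) ^ k)
      * ((sym x : ℂ) ^ k * char n x))
    (f := fun x => Complex.exp (Complex.I * t * sym x) * char n x)
    (fun k _ => (|t| * d) ^ k / k.factorial)
    (fun k => (continuous_const.mul (continuous_sym_pow_mul_char k n)).aestronglyMeasurable)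
    (fun k => Filter.Eventually.of_forall fun x => by
      rw [norm_mul, norm_mul, norm_inv, norm_pow, norm_mul, Complex.norm_I, one_mul,
        Complex.norm_real, Complex.norm_natCast, Real.norm_eq_abs, mul_pow]
      calc _ ≤ ((k.factorial : ℝ)⁻¹ * |t| ^ k) * (d : ℝ) ^ k := by
            gcongr
            exact norm_sym_pow_mul_char_le k n x
        _ = _ := by ring)
    (Filter.Eventually.of_forall fun _ => hS)
    (integrable_const _)
    (Filter.Eventually.of_forall fun x => by
      have h := (NormedSpace.expSeries_div_hasSum_exp (Complex.I * t * sym x)).mul_right (char n x)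
      rw [← Complex.exp_eq_exp_ℂ] at h
      convert! h using 2 with k
      rw [mul_pow (Complex.I * t : ℂ)]
      ring)
  have h2 := this.mul_left ((((2 * Real.pi : ℝ) : ℂ)⁻¹) ^ d)
  convert! h2 using 2 with k
  rw [integral_const_mul, moment]
  ring

section
variable {d : ℕ} {L : lp (fun _ : Fin d → ℤ => ℂ) 2 →L[ℂ] lp (fun _ : Fin d → ℤ => ℂ) 2}

lemma laplacian_pow_single (hL : IsDiscreteLaplacian d L) (k : ℕ) (n m : Fin d → ℤ) :
    (L ^ k) (lp.single 2 m (1 : ℂ)) n = moment k (n - m) := by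
  induction k generalizing n with
  | zero =>
    rw [moment_zero, pow_zero, one_apply_eq_self, lp.single_apply, Pi.single_apply]
    simp only [sub_eq_zero]
  | succ k ih =>
    rw [pow_succ', mul_apply_eq_comp, hL, moment_succ]
    simp_rw [ih]
    simp only [add_sub_right_comm, sub_right_comm]

/-- The matrix elements of `exp (i t L)`, obtained by comparing power series in `t`. This avoids
identifying `ℓ²` with the `L²` space of the torus. -/
lemma exp_laplacian_single (hL : IsDiscreteLaplacian d L) (t : ℝ) (n m : Fin d → ℤ) :
    (NormedSpace.exp ((Complex.I * t) • L)) (lp.single 2 m (1 : ℂ)) n = ker (n - m) t := by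
  have h := NormedSpace.exp_series_hasSum_exp' (𝕂 := ℂ) ((Complex.I * t) • L)
  have h2 := (h.mapL ((ContinuousLinearMap.apply ℂ (lp (fun _ : Fin d → ℤ => ℂ) 2)
    (lp.single 2 m (1 : ℂ))))).mapL (lp.evalCLM ℂ (fun _ : Fin d → ℤ => ℂ) 2 n)
  refine HasSum.unique h2 ?_
  convert! hasSum_moment (n - m) t using 2 with k
  rw [smul_pow, ← laplacian_pow_single hL, mul_assoc]
  rfl

end

/-! ### The uniform bound on the resolvent kernel -/

section
variable {d : ℕ} {L : lp (fun _ : Fin d → ℤ => ℂ) 2 →L[ℂ] lp (fun _ : Fin d → ℤ => ℂ) 2}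

/-- `exp (i t L)` is unitary because `L` is self-adjoint. -/
lemma norm_exp_laplacian_le (hL : IsDiscreteLaplacian d L) (t : ℝ) :
    ‖NormedSpace.exp ((Complex.I * t) • L)‖ ≤ 1 := by
  have := nontrivial_l2 d
  let +nondep : NormedAlgebra ℚ
    (lp (fun _ : Fin d → ℤ => ℂ) 2 →L[ℂ] lp (fun _ : Fin d → ℤ => ℂ) 2) := .restrictScalars ℚ ℂ _
  have hI : star (Complex.I * t) = -(Complex.I * t) := by simp
  have hu := NormedSpace.exp_mem_unitary_of_mem_skewAdjoint
    ((isSelfAdjoint_laplacian hL).smul_mem_skewAdjoint hI)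
  exact (CStarRing.norm_of_mem_unitary hu).le

/-- Off the real axis the resolvent is a time integral of the propagator against the factor
`exp (-i t σ l)`, which has modulus at most `1` when time runs in the direction `σ` with
`σ * l.im < 0`. Hence its kernel is bounded by the time integral of `ker`, with no loss as `l`
approaches the real axis. -/
lemma norm_resolvent_single_le_of_im_ne_zero (hL : IsDiscreteLaplacian d L) {C : ℝ}
    (hC : ∀ (n : Fin d → ℤ) (σ T : ℝ), |σ| = 1 → 0 ≤ T →
      ∫ t in (0 : ℝ)..T, ‖ker n (σ * t)‖ ≤ C)
    {l : ℂ} (hl : l.im ≠ 0) (n m : Fin d → ℤ) :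
    ‖(Ring.inverse (L - l • 1)) (lp.single 2 m (1 : ℂ)) n‖ ≤ C := by
  have hu := isUnit_sub_smul_one hL (l := l) (fun h => hl h.1)
  -- the direction of time in which `exp (t X)` decays
  obtain ⟨σ, hσ, hσl⟩ : ∃ σ : ℝ, |σ| = 1 ∧ σ * l.im < 0 := by
    rcases hl.lt_or_gt with h | h
    · exact ⟨1, by simp, by simpa using h⟩
    · exact ⟨-1, by simp, by simpa using h⟩
  set R := Ring.inverse (L - l • 1) with hR
  set δ : lp (fun _ : Fin d → ℤ => ℂ) 2 := lp.single 2 m (1 : ℂ) with hδ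
  set X := (σ * Complex.I : ℂ) • (L - l • 1) with hX
  -- `exp (t X)` is a damping scalar times the propagator at time `σ t`
  have hexp : ∀ t : ℝ, NormedSpace.exp (t • X) = Complex.exp (-(t * σ * l * Complex.I)) •
      NormedSpace.exp ((Complex.I * (σ * t : ℝ)) • L) := by
    intro t
    let +nondep : NormedAlgebra ℚ
      (lp (fun _ : Fin d → ℤ => ℂ) 2 →L[ℂ] lp (fun _ : Fin d → ℤ => ℂ) 2) := .restrictScalars ℚ ℂ _
    have h0 : t • X = (t : ℂ) • X := rfl
    have h1 : t • X = algebraMap ℂ _ (-(t * σ * l * Complex.I)) + (Complex.I * (σ * t : ℝ)) • L := by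
      rw [h0, hX, Algebra.algebraMap_eq_smul_one, smul_sub, smul_sub, smul_smul,
        smul_smul, smul_smul, sub_eq_neg_add, ← neg_smul]
      congr 2
      · ring
      · push_cast; ring
    rw [h1, NormedSpace.exp_add_of_commute (Algebra.commutes _ _), ← NormedSpace.algebraMap_exp_comm,
      Algebra.algebraMap_eq_smul_one, smul_mul_assoc, one_mul, Complex.exp_eq_exp_ℂ]
  have hnexp : ∀ t : ℝ, ‖Complex.exp (-(t * σ * l * Complex.I))‖ = Real.exp (t * (σ * l.im)) := by
    intro t
    rw [Complex.norm_exp]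
    congr 1
    simp
    ring
  -- `h` runs from `R δ n` at time `0` to `0` at infinity, and its derivative is given by `ker`
  set h : ℝ → ℂ := fun t => (NormedSpace.exp (t • X)) (R δ) n with hh
  set ev : (lp (fun _ : Fin d → ℤ => ℂ) 2 →L[ℂ] lp (fun _ : Fin d → ℤ => ℂ) 2) →L[ℝ] ℂ :=
    ((lp.evalCLM ℂ (fun _ : Fin d → ℤ => ℂ) 2 n).comp
      (ContinuousLinearMap.apply ℂ (lp (fun _ : Fin d → ℤ => ℂ) 2) (R δ))).restrictScalars ℝ with hev
  have hRδ : X (R δ) = (σ * Complex.I : ℂ) • δ := by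
    have h1 : (L - l • 1) (R δ) = δ := by
      rw [← mul_apply_eq_comp, hR, Ring.mul_inverse_cancel _ hu, one_apply_eq_self]
    rw [hX, _root_.smul_apply, h1]
  set h' : ℝ → ℂ := fun t => (σ * Complex.I) *
    (Complex.exp (-(t * σ * l * Complex.I)) * ker (n - m) (σ * t)) with hh'
  have hder : ∀ t, HasDerivAt h (h' t) t := by
    intro t
    have h1 := ev.hasFDerivAt.comp_hasDerivAt t (hasDerivAt_exp_smul_const X t)
    refine HasDerivAt.congr_deriv h1 ?_
    have h2 : ev (NormedSpace.exp (t • X) * X) = (NormedSpace.exp (t • X) (X (R δ))) n := rfl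
    refine h2.trans ?_
    rw [hRδ, map_smul, hexp, lp.coeFn_smul, Pi.smul_apply, _root_.smul_apply,
      lp.coeFn_smul, Pi.smul_apply, exp_laplacian_single hL, smul_eq_mul, smul_eq_mul]
  have hkc : Continuous fun t : ℝ => ker (n - m) (σ * t) :=
    (continuous_ker (n - m)).comp (continuous_const.mul continuous_id)
  have hc' : Continuous h' := by fun_prop
  have hbound : ∀ T : ℝ, 0 ≤ T → ‖h 0‖ ≤ Real.exp (T * (σ * l.im)) * ‖R δ‖ + C := by
    intro T hT
    have hftc : ∫ t in (0 : ℝ)..T, h' t = h T - h 0 :=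
      intervalIntegral.integral_eq_sub_of_hasDerivAt (fun t _ => hder t)
        (hc'.intervalIntegrable _ _)
    have h1 : ‖∫ t in (0 : ℝ)..T, h' t‖ ≤ C := by
      refine le_trans ?_ (hC (n - m) σ T hσ hT)
      refine intervalIntegral.norm_integral_le_of_norm_le hT
        (Filter.Eventually.of_forall fun t ht => ?_) (hkc.norm.intervalIntegrable _ _)
      rw [hh']
      simp only
      rw [norm_mul, norm_mul, norm_mul, hnexp, Complex.norm_real, Real.norm_eq_abs, hσ,
        Complex.norm_I, one_mul, one_mul]
      refine mul_le_of_le_one_left (norm_nonneg _) ?_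
      rw [Real.exp_le_one_iff]
      exact mul_nonpos_of_nonneg_of_nonpos ht.1.le hσl.le
    have h2 : ‖h T‖ ≤ Real.exp (T * (σ * l.im)) * ‖R δ‖ := by
      refine (lp.norm_apply_le_norm two_ne_zero _ n).trans ?_
      rw [hexp, _root_.smul_apply, norm_smul, hnexp]
      gcongr
      refine (ContinuousLinearMap.le_opNorm _ _).trans ?_
      exact mul_le_of_le_one_left (norm_nonneg _) (norm_exp_laplacian_le hL _)
    have h3 : h 0 = h T - ∫ t in (0 : ℝ)..T, h' t := by rw [hftc]; ring
    rw [h3]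
    exact (norm_sub_le _ _).trans (add_le_add h2 h1)
  have hlim : Filter.Tendsto (fun T : ℝ => Real.exp (T * (σ * l.im)) * ‖R δ‖ + C)
      Filter.atTop (nhds (0 * ‖R δ‖ + C)) := by
    refine Filter.Tendsto.add_const _ (Filter.Tendsto.mul_const _ ?_)
    exact Real.tendsto_exp_atBot.comp (Filter.tendsto_id.atTop_mul_const_of_neg hσl)
  have hfin := ge_of_tendsto hlim ((Filter.eventually_ge_atTop 0).mono hbound)
  have h0 : h 0 = R δ n := by
    rw [hh]
    simp
  rw [h0] at hfin
  simpa using hfin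

/-- Real spectral parameters outside `[-d, d]` are limits of nonreal ones, and the bound for the
latter is uniform. -/
lemma norm_resolvent_single_le (hL : IsDiscreteLaplacian d L) {C : ℝ}
    (hC : ∀ (n : Fin d → ℤ) (σ T : ℝ), |σ| = 1 → 0 ≤ T →
      ∫ t in (0 : ℝ)..T, ‖ker n (σ * t)‖ ≤ C)
    {l : ℂ} (hl : ¬ (l.im = 0 ∧ |l.re| ≤ d)) (n m : Fin d → ℤ) :
    ‖(Ring.inverse (L - l • 1)) (lp.single 2 m (1 : ℂ)) n‖ ≤ C := by
  by_cases him : l.im = 0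
  swap
  · exact norm_resolvent_single_le_of_im_ne_zero hL hC him n m
  obtain ⟨u, hu⟩ := isUnit_sub_smul_one hL hl
  set ev : (lp (fun _ : Fin d → ℤ => ℂ) 2 →L[ℂ] lp (fun _ : Fin d → ℤ => ℂ) 2) →L[ℂ] ℂ :=
    ((lp.evalCLM ℂ (fun _ : Fin d → ℤ => ℂ) 2 n).comp
      (ContinuousLinearMap.apply ℂ (lp (fun _ : Fin d → ℤ => ℂ) 2) (lp.single 2 m (1 : ℂ)))) with hev
  have hinv : ContinuousAt Ring.inverse (L - l • 1) := hu ▸ NormedRing.inverse_continuousAt u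
  have hpath : ContinuousAt (fun ε : ℝ => L - (l + ε * Complex.I) •
      (1 : lp (fun _ : Fin d → ℤ => ℂ) 2 →L[ℂ] lp (fun _ : Fin d → ℤ => ℂ) 2)) 0 := by
    fun_prop
  have hcont : ContinuousAt (fun ε : ℝ => ‖ev (Ring.inverse (L - (l + ε * Complex.I) • 1))‖) 0 := by
    refine (ev.continuous.continuousAt.comp (ContinuousAt.comp (g := Ring.inverse) ?_ hpath)).norm
    simpa using hinv
  have hlim := hcont.tendsto.mono_left (nhdsWithin_le_nhds (s := Set.Ioi 0))
  have hle := le_of_tendsto hlim (Filter.eventually_of_mem self_mem_nhdsWithin (fun ε (hε : 0 < ε) => by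
    have h1 : (l + ε * Complex.I).im ≠ 0 := by simp [him, hε.ne']
    exact norm_resolvent_single_le_of_im_ne_zero hL hC h1 n m))
  simp only [Complex.ofReal_zero, zero_mul, add_zero] at hle
  exact hle

end

/-- For `d ≥ 3` there is `C = C(d) > 0` such that for every
square-summable `q : ℤᵈ → ℂ` and every `λ ∈ ℂ \ [-d,d]`, the operator `Δ - λI` is
boundedly invertible and
`∑_{n,n'} |q(n)|² |((Δ-λI)⁻¹δ_{n'})(n)|² |q(n')|² ≤ C (∑_n |q(n)|²)²`,
the double family on the left being summable. -/
theorem statement8 (d : ℕ) (hd : 3 ≤ d)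
    (L : lp (fun _ : Fin d → ℤ => ℂ) 2 →L[ℂ] lp (fun _ : Fin d → ℤ => ℂ) 2)
    (hL : IsDiscreteLaplacian d L) :
    ∃ C : ℝ, 0 < C ∧ ∀ q : (Fin d → ℤ) → ℂ, Summable (fun n => ‖q n‖ ^ 2) →
      ∀ l : ℂ, ¬ (l.im = 0 ∧ |l.re| ≤ d) →
      IsUnit (L - l • (1 : lp (fun _ : Fin d → ℤ => ℂ) 2 →L[ℂ] lp (fun _ : Fin d → ℤ => ℂ) 2)) ∧
      Summable (fun p : (Fin d → ℤ) × (Fin d → ℤ) =>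
        ‖q p.1‖ ^ 2 * ‖(Ring.inverse (L - l • 1)) (lp.single 2 p.2 (1:ℂ)) p.1‖ ^ 2 * ‖q p.2‖ ^ 2) ∧
      (∑' p : (Fin d → ℤ) × (Fin d → ℤ),
        ‖q p.1‖ ^ 2 * ‖(Ring.inverse (L - l • 1)) (lp.single 2 p.2 (1:ℂ)) p.1‖ ^ 2 * ‖q p.2‖ ^ 2)
        ≤ C * (∑' n : Fin d → ℤ, ‖q n‖ ^ 2) ^ 2 := by
  obtain ⟨C, hC0, hC⟩ := exists_integral_norm_ker_le hd
  refine ⟨C ^ 2, by positivity, fun q hq l hl => ⟨isUnit_sub_smul_one hL hl, ?_⟩⟩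
  have hG := norm_resolvent_single_le hL hC hl
  have hprod : Summable fun p : (Fin d → ℤ) × (Fin d → ℤ) =>
      C ^ 2 * (‖q p.1‖ ^ 2 * ‖q p.2‖ ^ 2) :=
    (hq.mul_of_nonneg hq (fun _ => by positivity) (fun _ => by positivity)).mul_left _
  have hle : ∀ p : (Fin d → ℤ) × (Fin d → ℤ),
      ‖q p.1‖ ^ 2 * ‖(Ring.inverse (L - l • 1)) (lp.single 2 p.2 (1:ℂ)) p.1‖ ^ 2 * ‖q p.2‖ ^ 2
        ≤ C ^ 2 * (‖q p.1‖ ^ 2 * ‖q p.2‖ ^ 2) := by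
    intro p
    have h1 := pow_le_pow_left₀ (norm_nonneg _) (hG p.1 p.2) 2
    calc _ ≤ ‖q p.1‖ ^ 2 * C ^ 2 * ‖q p.2‖ ^ 2 := by gcongr
      _ = _ := by ring
  have hsum := Summable.of_nonneg_of_le (fun p => by positivity) hle hprod
  refine ⟨hsum, (hsum.tsum_le_tsum hle hprod).trans_eq ?_⟩
  have hqn : Summable fun n => ‖‖q n‖ ^ 2‖ := by simpa using hq
  rw [tsum_mul_left, sq (∑' n, _), tsum_mul_tsum_of_summable_norm hqn hqn]
end
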